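/- arXiv:2201.12118 — 3 statements merged into one kernel-verified Lean document; each statement's English description precedes it below -/
import Mathlib

section
/- Let 𝓔 be a locally finite subset of [0,∞) with weight function ω : 𝓔 → (0,∞), growth function ω̃(t) = Σ_{x∈𝓔, x≤t} ω(x), and suppose ω̃(t) ~ c t^α e^{δt} as t → ∞ for some c, δ > 0, α ∈ ℝ. Then for all real a < b, Σ_{x,y∈𝓔: x,y≤N, a ≤ y-x ≤ b} ω(x)ω(y) ~ (δ/2) ω̃(N)² ∫_a^b e^{-δ|t|} dt as N → ∞. -/
open Filter Real

/-!
Let `μ = ∑ ω(x) δ_x` and `W(t) = μ (Iic t)`. If `x` is sampled from `μ` conditioned to `(-∞, T]`,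
the lag `T - x` is at least `s ≥ 0` with probability `W(T - s) / W(T)`, which tends to `e^{-δs}`.
Hence the lags converge weakly to an exponential law, and the lags of two independent points to a
product of two such laws. Since `y - x = (T - x) - (T - y)`, the normalized pair correlation
measures converge weakly to the law of a difference of two independent exponential variables, the
Laplace law `(δ / 2) e^{-δ|t|} dt`. This law has no atoms, so the masses of `[a, b]` converge as
well.
-/

open MeasureTheory ProbabilityTheory Set Topology
open scoped NNReal ENNReal

theorem eventually_ne_zero_of_tendsto_div {ι K : Type*} [GroupWithZero K] [TopologicalSpace K]
    [T1Space K] {l : Filter ι} {u v : ι → K} {c : K} (hc : c ≠ 0)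
    (h : Tendsto (fun i => u i / v i) l (𝓝 c)) : ∀ᶠ i in l, v i ≠ 0 := by
  filter_upwards [h.eventually_ne hc] with i hi hv
  exact hi (by rw [hv, div_zero])

theorem tendsto_shift_div_of_tendsto_div_rpow_mul_exp {W : ℝ → ℝ} {c δ α : ℝ} (hc : c ≠ 0)
    (hW : Tendsto (fun t => W t / (c * t ^ α * exp (δ * t))) atTop (𝓝 1)) (s : ℝ) :
    Tendsto (fun t => W (t + s) / W t) atTop (𝓝 (exp (δ * s))) := by
  have hshift : Tendsto (fun t : ℝ => t + s) atTop atTop :=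
    tendsto_atTop_add_const_right _ _ tendsto_id
  have hequiv := Asymptotics.isEquivalent_of_tendsto_one hW
  refine ((hequiv.comp_tendsto hshift).div hequiv).symm.tendsto_nhds ?_
  have hquot : Tendsto (fun t : ℝ => 1 + s / t) atTop (𝓝 1) := by
    simpa using (tendsto_const_nhds (x := (1 : ℝ))).add (tendsto_const_nhds.div_atTop tendsto_id)
  have hmain := (hquot.rpow_const (p := α) (Or.inl one_ne_zero)).mul_const (exp (δ * s))
  rw [one_rpow, one_mul] at hmain
  refine hmain.congr' ?_
  filter_upwards [eventually_gt_atTop 0, hshift.eventually_gt_atTop 0] with t ht hts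
  have hpow := (rpow_pos_of_pos ht α).ne'
  simp only [Function.comp_apply, Pi.div_apply]
  rw [one_add_div ht.ne', div_rpow hts.le ht.le, mul_add, exp_add]
  field_simp

theorem tendsto_probabilityMeasure_of_forall_measureReal_Ici {ι : Type*} {l : Filter ι}
    [l.IsCountablyGenerated] {P : ι → ProbabilityMeasure ℝ} {Q : ProbabilityMeasure ℝ}
    (h : ∀ s : ℝ, Tendsto (fun i => (P i : Measure ℝ).real (Ici s)) l
      (𝓝 ((Q : Measure ℝ).real (Ici s)))) :
    Tendsto P l (𝓝 Q) := by
  have real_Ico (R : ProbabilityMeasure ℝ) {u v : ℝ} (huv : u < v) :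
      ((R (Ico u v) : ℝ≥0) : ℝ) =
        (R : Measure ℝ).real (Ici u) - (R : Measure ℝ).real (Ici v) := by
    rw [← Ici_sdiff_Ici, ← measureReal_sdiff (Ici_subset_Ici.2 huv.le) measurableSet_Ici]
    rfl
  refine (isPiSystem_Ico (id : ℝ → ℝ) id).tendsto_probabilityMeasure_of_tendsto_of_mem ?_ ?_ ?_
  · rintro _ ⟨u, v, -, rfl⟩
    exact measurableSet_Ico
  · intro U hU x hx
    obtain ⟨u, v, ⟨hux, hxv⟩, hsub⟩ := mem_nhds_iff_exists_Ioo_subset.1 (hU.mem_nhds hx)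
    obtain ⟨w, huw, hwx⟩ := exists_between hux
    exact ⟨Ico w v, ⟨w, v, hwx.trans hxv, rfl⟩, Ico_mem_nhds hwx hxv,
      (Ico_subset_Ioo_left huw).trans hsub⟩
  · rintro _ ⟨u, v, huv, rfl⟩
    rw [← NNReal.tendsto_coe]
    simp_rw [real_Ico _ huv]
    exact (h u).sub (h v)

theorem map_sub_prod_withDensity {G : Type*} [MeasurableSpace G] [AddGroup G] [MeasurableAdd₂ G]
    [MeasurableSub₂ G] (ν : Measure G) [SFinite ν] [ν.IsAddRightInvariant]
    {f g : G → ℝ≥0∞} (hf : Measurable f) (hg : Measurable g) :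
    ((ν.withDensity f).prod (ν.withDensity g)).map (fun p => p.1 - p.2) =
      ν.withDensity fun t => ∫⁻ y, f (t + y) * g y ∂ν := by
  ext S hS
  have hsub : Measurable fun p : G × G => p.1 - p.2 := by fun_prop
  rw [Measure.map_apply hsub hS, prod_withDensity hf hg, withDensity_apply _ (hsub hS),
    withDensity_apply _ hS, ← lintegral_indicator (hsub hS), ← lintegral_indicator hS]
  calc
    _ = ∫⁻ y, ∫⁻ x, S.indicator (fun t => f (t + y) * g y) (x - y) ∂ν ∂ν := by
      rw [lintegral_prod_symm _ (by fun_prop (disch := exact hsub hS))]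
      refine lintegral_congr fun y => lintegral_congr fun x => ?_
      by_cases h : x - y ∈ S <;> simp [h]
    _ = ∫⁻ y, ∫⁻ t, S.indicator (fun t => f (t + y) * g y) t ∂ν ∂ν := by
      refine lintegral_congr fun y => ?_
      rw [← lintegral_add_right_eq_self _ y]
      simp only [add_sub_cancel_right]
    _ = ∫⁻ t, ∫⁻ y, S.indicator (fun t => f (t + y) * g y) t ∂ν ∂ν := by
      refine lintegral_lintegral_swap (Measurable.aemeasurable ?_)
      have : Measurable fun p : G × G => f (p.2 + p.1) * g p.1 := by fun_prop
      exact this.indicator (measurable_snd hS)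
    _ = _ := by
      refine lintegral_congr fun t => ?_
      by_cases ht : t ∈ S <;> simp [ht]

theorem measureReal_Ici_expMeasure {r : ℝ} (hr : 0 < r) (x : ℝ) :
    (expMeasure r).real (Ici x) = exp (-(r * max x 0)) := by
  have := isProbabilityMeasure_expMeasure hr
  have hac : expMeasure r ≪ volume := withDensity_absolutelyContinuous _ _
  rw [← measureReal_congr (hac.ae_eq Ioi_ae_eq_Ici), ← compl_Iic,
    probReal_compl_eq_one_sub measurableSet_Iic, ← cdf_eq_real, cdf_expMeasure_eq hr]
  split_ifs with hx
  · rw [max_eq_left hx, sub_sub_cancel]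
  · simp [max_eq_right (not_le.1 hx).le]

/-- The Laplace distribution with rate `r`: the law of the difference of two independent
exponential variables of rate `r`, and the limit of the pair correlation measures. -/
noncomputable def laplaceMeasure (r : ℝ) : Measure ℝ :=
  volume.withDensity fun t => ENNReal.ofReal (r / 2 * exp (-r * |t|))

theorem lintegral_exponentialPDF_mul_shift {r : ℝ} (hr : 0 < r) (t : ℝ) :
    ∫⁻ y, exponentialPDF r (t + y) * exponentialPDF r y =
      ENNReal.ofReal (r / 2 * exp (-r * |t|)) := by
  set m := max (-t) 0 with hm
  have mul_eq (y : ℝ) : exponentialPDF r (t + y) * exponentialPDF r y =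
      (Ici m).indicator
        (fun y => ENNReal.ofReal (r ^ 2 * exp (-r * t) * exp (-(2 * r) * y))) y := by
    by_cases hy : y ∈ Ici m
    · obtain ⟨hty, hy0⟩ := max_le_iff.1 (mem_Ici.1 hy)
      rw [indicator_of_mem hy, exponentialPDF_of_nonneg (neg_le_iff_add_nonneg'.1 hty),
        exponentialPDF_of_nonneg hy0, ← ENNReal.ofReal_mul (by positivity), mul_mul_mul_comm,
        mul_assoc (r ^ 2), ← exp_add, ← exp_add]
      ring_nf
    · rw [indicator_of_notMem hy]
      rcases lt_max_iff.1 (not_le.1 (mt mem_Ici.2 hy)) with hty | hy0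
      · rw [exponentialPDF_of_neg (lt_neg_iff_add_neg'.1 hty), zero_mul]
      · rw [exponentialPDF_of_neg hy0, mul_zero]
  have hneg : -(2 * r) < 0 := by linarith
  have hexp : -r * t + -(2 * r) * m = -r * |t| := by
    rcases le_total 0 t with ht | ht
    · rw [hm, abs_of_nonneg ht, max_eq_right (by linarith)]; ring
    · rw [hm, abs_of_nonpos ht, max_eq_left (by linarith)]; ring
  simp_rw [mul_eq]
  rw [lintegral_indicator measurableSet_Ici, setLIntegral_congr Ioi_ae_eq_Ici.symm,
    ← ofReal_integral_eq_lintegral_ofReal ((integrableOn_exp_mul_Ioi hneg m).const_mul _)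
      (Eventually.of_forall fun y => by positivity),
    integral_const_mul, integral_exp_mul_Ioi hneg, neg_div_neg_eq, ← hexp, exp_add]
  congr 1
  field_simp

theorem map_sub_prod_expMeasure {r : ℝ} (hr : 0 < r) :
    ((expMeasure r).prod (expMeasure r)).map (fun p => p.1 - p.2) = laplaceMeasure r := by
  have hpdf : Measurable (exponentialPDF r) := (measurable_exponentialPDFReal r).ennreal_ofReal
  refine (map_sub_prod_withDensity volume hpdf hpdf).trans ?_
  simp_rw [lintegral_exponentialPDF_mul_shift hr]
  rfl

theorem isProbabilityMeasure_laplaceMeasure {r : ℝ} (hr : 0 < r) :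
    IsProbabilityMeasure (laplaceMeasure r) := by
  have := isProbabilityMeasure_expMeasure hr
  rw [← map_sub_prod_expMeasure hr]
  exact Measure.isProbabilityMeasure_map (by fun_prop)

theorem measureReal_Icc_laplaceMeasure {r : ℝ} (hr : 0 ≤ r) {a b : ℝ} (hab : a ≤ b) :
    (laplaceMeasure r).real (Icc a b) = r / 2 * ∫ t in a..b, exp (-r * |t|) := by
  rw [Measure.real, laplaceMeasure, withDensity_apply _ measurableSet_Icc,
    ← ofReal_integral_eq_lintegral_ofReal (Continuous.integrableOn_Icc (by fun_prop))
      (Eventually.of_forall fun t => by positivity),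
    ENNReal.toReal_ofReal (integral_nonneg fun t => by positivity), integral_const_mul,
    intervalIntegral.integral_of_le hab, integral_Icc_eq_integral_Ioc]

section WeightMeasure

variable {α β : Type*} [MeasurableSpace α] [MeasurableSpace β]

/-- The discrete measure `∑ x ∈ E, w x • δ_x` of a weighted set; its distribution function
`t ↦ μ (Iic t)` is the growth function of the weighted set. -/
noncomputable def weightMeasure (E : Set α) (w : α → ℝ≥0∞) : Measure α :=
  Measure.sum fun x : E => w x • Measure.dirac (x : α)

theorem restrict_weightMeasure {E s : Set α} (hs : MeasurableSet s) (hE : (E ∩ s).Finite)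
    (w : α → ℝ≥0∞) :
    (weightMeasure E w).restrict s = ∑ x ∈ hE.toFinset, w x • Measure.dirac x := by
  classical
  ext S hS
  rw [weightMeasure, Measure.restrict_sum _ hs, Measure.sum_apply _ hS, Measure.finsetSum_apply,
    tsum_subtype E fun x => ((w x • Measure.dirac x).restrict s) S,
    tsum_eq_sum (s := hE.toFinset)]
  · refine Finset.sum_congr rfl fun x hx => ?_
    obtain ⟨hxE, hxs⟩ := hE.mem_toFinset.1 hx
    rw [indicator_of_mem hxE, Measure.restrict_smul, restrict_dirac' hs, if_pos hxs]
  · intro x hx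
    by_cases hxE : x ∈ E
    · have hxs : x ∉ s := fun hxs => hx (hE.mem_toFinset.2 ⟨hxE, hxs⟩)
      rw [indicator_of_mem hxE, Measure.restrict_smul, restrict_dirac' hs, if_neg hxs, smul_zero,
        Measure.coe_zero, Pi.zero_apply]
    · exact indicator_of_notMem hxE _

theorem sum_smul_dirac_prod_sum_smul_dirac (F : Finset α) (G : Finset β) (v : α → ℝ≥0∞)
    (w : β → ℝ≥0∞) :
    (∑ x ∈ F, v x • Measure.dirac x).prod (∑ y ∈ G, w y • Measure.dirac y) =
      ∑ p ∈ F ×ˢ G, (v p.1 * w p.2) • Measure.dirac p := by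
  rw [Finset.sum_product]
  simp_rw [← Measure.sum_coe_finset, Measure.prod_sum, Measure.sum_fintype, Fintype.sum_prod_type,
    Measure.prod_smul_left, Measure.prod_smul_right, Measure.dirac_prod_dirac, smul_smul]

theorem measureReal_sum_ofReal_smul_dirac (F : Finset α) {w : α → ℝ} (hw : ∀ x ∈ F, 0 ≤ w x)
    {S : Set α} (hS : MeasurableSet S) [DecidablePred (· ∈ S)] :
    (∑ x ∈ F, ENNReal.ofReal (w x) • Measure.dirac x).real S =
      ∑ x ∈ F, if x ∈ S then w x else 0 := by
  rw [Measure.real, Measure.finsetSum_apply, ENNReal.toReal_sum]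
  · refine Finset.sum_congr rfl fun x hx => ?_
    split_ifs with hxS <;> simp [Measure.dirac_apply' _ hS, hxS, hw x hx]
  · simp [ENNReal.mul_eq_top, measure_ne_top]

end WeightMeasure

theorem measureReal_Iic_weightMeasure {E : Set ℝ} {T : ℝ} (hE : (E ∩ Iic T).Finite) {ω : ℝ → ℝ}
    (hω : ∀ x ∈ E, 0 ≤ ω x) :
    (weightMeasure E fun x => ENNReal.ofReal (ω x)).real (Iic T) = ∑ x ∈ hE.toFinset, ω x := by
  have hω' : ∀ x ∈ hE.toFinset, 0 ≤ ω x := fun x hx => hω x (hE.mem_toFinset.1 hx).1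
  classical
  rw [← measureReal_restrict_apply_univ, restrict_weightMeasure measurableSet_Iic hE,
    measureReal_sum_ofReal_smul_dirac _ hω' MeasurableSet.univ]
  simp only [mem_univ, if_true]

section PairCorrelation

open scoped Classical in
/-- The law of a point sampled from `μ` conditioned to lie in `(-∞, T]`, as an element of the space
`ProbabilityMeasure ℝ` carrying the weak topology; it is the junk value `δ_0` when `μ (Iic T)` is
`0` or `∞`. -/
noncomputable def condIic (μ : Measure ℝ) (T : ℝ) : ProbabilityMeasure ℝ :=
  if h : IsProbabilityMeasure (μ[|Iic T]) then ⟨μ[|Iic T], h⟩ else diracProba 0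

/-- The law of the distance `T - x` to the cutoff `T` of a point `x` sampled from `condIic μ T`. -/
noncomputable def lagLaw (μ : Measure ℝ) (T : ℝ) : ProbabilityMeasure ℝ :=
  (condIic μ T).map (f := fun x => T - x) (by fun_prop)

/-- The normalized pair correlation measure of `μ` at scale `T`: the law of `y - x` for independent
`x` and `y` sampled from `condIic μ T`. -/
noncomputable def pairCorrelation (μ : Measure ℝ) (T : ℝ) : ProbabilityMeasure ℝ :=
  ((condIic μ T).prod (condIic μ T)).map (f := fun p => p.2 - p.1) (by fun_prop)

variable {μ : Measure ℝ} {T : ℝ}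

theorem toMeasure_condIic (hT : μ.real (Iic T) ≠ 0) :
    (condIic μ T : Measure ℝ) = μ[|Iic T] := by
  have h := ENNReal.toReal_ne_zero.1 hT
  exact congrArg Subtype.val (dif_pos (cond_isProbabilityMeasure_of_finite h.1 h.2))

theorem map_sub_prod_lagLaw (μ : Measure ℝ) (T : ℝ) :
    ((lagLaw μ T).prod (lagLaw μ T)).map (f := fun p => p.1 - p.2) (by fun_prop) =
      pairCorrelation μ T := by
  apply Subtype.ext
  change Measure.map _ (((condIic μ T : Measure ℝ).map _).prod ((condIic μ T : Measure ℝ).map _)) =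
    Measure.map _ ((condIic μ T : Measure ℝ).prod _)
  rw [Measure.map_prod_map _ _ (by fun_prop) (by fun_prop),
    Measure.map_map (by fun_prop) (by fun_prop)]
  congr 1
  ext p
  simp

theorem measureReal_Ici_lagLaw (hT : μ.real (Iic T) ≠ 0) (s : ℝ) :
    (lagLaw μ T : Measure ℝ).real (Ici s) = μ.real (Iic (T - max s 0)) / μ.real (Iic T) := by
  have hinter : Iic T ∩ (fun x => T - x) ⁻¹' Ici s = Iic (T - max s 0) := by
    ext x
    simp only [mem_inter_iff, mem_Iic, mem_preimage, mem_Ici]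
    grind
  rw [lagLaw, ProbabilityMeasure.toMeasure_map,
    map_measureReal_apply (by fun_prop) measurableSet_Ici, toMeasure_condIic hT,
    measureReal_def, cond_apply measurableSet_Iic, hinter, ENNReal.toReal_mul, ENNReal.toReal_inv,
    inv_mul_eq_div, measureReal_def, measureReal_def]

theorem measureReal_pairCorrelation (hT : μ.real (Iic T) ≠ 0) {S : Set ℝ} (hS : MeasurableSet S) :
    (pairCorrelation μ T : Measure ℝ).real S =
      ((μ.restrict (Iic T)).prod (μ.restrict (Iic T))).real {p | p.2 - p.1 ∈ S} /
        μ.real (Iic T) ^ 2 := by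
  have : IsFiniteMeasure (μ.restrict (Iic T)) :=
    isFiniteMeasure_restrict.2 (ENNReal.toReal_ne_zero.1 hT).2
  rw [pairCorrelation, ProbabilityMeasure.toMeasure_map, map_measureReal_apply (by fun_prop) hS,
    ProbabilityMeasure.toMeasure_prod, toMeasure_condIic hT, ProbabilityTheory.cond,
    Measure.prod_smul_left, Measure.prod_smul_right, measureReal_ennreal_smul_apply,
    measureReal_ennreal_smul_apply, ENNReal.toReal_inv, ← measureReal_def,
    inv_mul_eq_div, inv_mul_eq_div, div_div, ← sq]
  rfl

variable {δ : ℝ}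

theorem tendsto_lagLaw (hδ : 0 < δ)
    (hμ : ∀ s, Tendsto (fun t => μ.real (Iic (t + s)) / μ.real (Iic t)) atTop
      (𝓝 (exp (δ * s)))) :
    Tendsto (lagLaw μ) atTop (𝓝 ⟨expMeasure δ, isProbabilityMeasure_expMeasure hδ⟩) := by
  refine tendsto_probabilityMeasure_of_forall_measureReal_Ici fun s => ?_
  change Tendsto _ _ (𝓝 ((expMeasure δ).real (Ici s)))
  rw [measureReal_Ici_expMeasure hδ, ← mul_neg]
  refine (hμ (-max s 0)).congr' ?_
  filter_upwards [eventually_ne_zero_of_tendsto_div (exp_ne_zero _) (hμ 0)] with T hT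
  rw [measureReal_Ici_lagLaw hT, sub_eq_add_neg]

theorem tendsto_pairCorrelation (hδ : 0 < δ)
    (hμ : ∀ s, Tendsto (fun t => μ.real (Iic (t + s)) / μ.real (Iic t)) atTop
      (𝓝 (exp (δ * s)))) :
    Tendsto (pairCorrelation μ) atTop
      (𝓝 ⟨laplaceMeasure δ, isProbabilityMeasure_laplaceMeasure hδ⟩) := by
  let X : ProbabilityMeasure ℝ := ⟨expMeasure δ, isProbabilityMeasure_expMeasure hδ⟩
  have hlag : Tendsto (lagLaw μ) atTop (𝓝 X) := tendsto_lagLaw hδ hμ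
  have hprod := (ProbabilityMeasure.continuous_prod.tendsto _).comp (hlag.prodMk_nhds hlag)
  have hmap := ProbabilityMeasure.tendsto_map_of_tendsto_of_continuous _ _ hprod
    (continuous_fst.sub continuous_snd)
  have hlaplace : (X.prod X).map (f := fun p => p.1 - p.2) (by fun_prop) =
      ⟨laplaceMeasure δ, isProbabilityMeasure_laplaceMeasure hδ⟩ :=
    Subtype.ext (map_sub_prod_expMeasure hδ)
  rw [← hlaplace]
  exact hmap.congr (map_sub_prod_lagLaw μ)

theorem tendsto_measureReal_pairCorrelation_Icc (hδ : 0 < δ)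
    (hμ : ∀ s, Tendsto (fun t => μ.real (Iic (t + s)) / μ.real (Iic t)) atTop
      (𝓝 (exp (δ * s)))) (a b : ℝ) :
    Tendsto (fun T => (pairCorrelation μ T : Measure ℝ).real (Icc a b)) atTop
      (𝓝 ((laplaceMeasure δ).real (Icc a b))) := by
  have hac : laplaceMeasure δ ≪ volume := withDensity_absolutelyContinuous _ _
  have hfrontier : laplaceMeasure δ (frontier (Icc a b)) = 0 :=
    hac ((convex_Icc a b).addHaar_frontier volume)
  have := isProbabilityMeasure_laplaceMeasure hδ
  exact (ENNReal.tendsto_toReal (measure_ne_top _ _)).comp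
    (ProbabilityMeasure.tendsto_measure_of_null_frontier_of_tendsto'
      (tendsto_pairCorrelation hδ hμ) hfrontier)

end PairCorrelation

theorem measureReal_Icc_pairCorrelation_weightMeasure {E : Set ℝ} {T : ℝ}
    (hE : (E ∩ Iic T).Finite) {ω : ℝ → ℝ} (hω : ∀ x ∈ E, 0 ≤ ω x)
    (hsum : ∑ x ∈ hE.toFinset, ω x ≠ 0) (a b : ℝ) :
    (pairCorrelation (weightMeasure E fun x => ENNReal.ofReal (ω x)) T : Measure ℝ).real (Icc a b) =
      (∑ x ∈ hE.toFinset, ∑ y ∈ hE.toFinset, if a ≤ y - x ∧ y - x ≤ b then ω x * ω y else 0) /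
        (∑ x ∈ hE.toFinset, ω x) ^ 2 := by
  have hω' : ∀ x ∈ hE.toFinset, 0 ≤ ω x := fun x hx => hω x (hE.mem_toFinset.1 hx).1
  have hprod : ∀ p ∈ hE.toFinset ×ˢ hE.toFinset, 0 ≤ ω p.1 * ω p.2 := fun p hp =>
    mul_nonneg (hω' _ (Finset.mem_product.1 hp).1) (hω' _ (Finset.mem_product.1 hp).2)
  have hband : MeasurableSet {p : ℝ × ℝ | p.2 - p.1 ∈ Icc a b} :=
    measurableSet_Icc.preimage (by fun_prop)
  classical
  rw [← measureReal_Iic_weightMeasure hE hω] at hsum ⊢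
  rw [measureReal_pairCorrelation hsum measurableSet_Icc,
    restrict_weightMeasure measurableSet_Iic hE, sum_smul_dirac_prod_sum_smul_dirac,
    Finset.sum_congr rfl fun p hp => by
      rw [← ENNReal.ofReal_mul (hω' _ (Finset.mem_product.1 hp).1)],
    measureReal_sum_ofReal_smul_dirac _ hprod hband, Finset.sum_product]
  simp only [mem_ofPred_eq, mem_Icc]

theorem pair_count_asymptotics_general {E : Set ℝ} (hfin : ∀ t : ℝ, (E ∩ Iic t).Finite)
    {ω : ℝ → ℝ} (hω : ∀ x ∈ E, 0 ≤ ω x) {δ : ℝ} (hδ : 0 < δ)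
    (hgrowth : ∀ s, Tendsto
      (fun t => (∑ x ∈ (hfin (t + s)).toFinset, ω x) / ∑ x ∈ (hfin t).toFinset, ω x)
      atTop (𝓝 (exp (δ * s))))
    {a b : ℝ} (hab : a < b) :
    Tendsto (fun T : ℝ =>
        (∑ x ∈ (hfin T).toFinset, ∑ y ∈ (hfin T).toFinset,
            if a ≤ y - x ∧ y - x ≤ b then ω x * ω y else 0) /
          (δ / 2 * (∑ x ∈ (hfin T).toFinset, ω x) ^ 2 * ∫ t in a..b, exp (-δ * |t|)))
      atTop (𝓝 1) := by
  have hnonzero := eventually_ne_zero_of_tendsto_div (exp_ne_zero _) (hgrowth 0)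
  have hintegral : 0 < ∫ t in a..b, exp (-δ * |t|) :=
    intervalIntegral.intervalIntegral_pos_of_pos
      (Continuous.intervalIntegrable (by fun_prop) _ _) (fun t => exp_pos _) hab
  have hcorr := tendsto_measureReal_pairCorrelation_Icc hδ
    (μ := weightMeasure E fun x => ENNReal.ofReal (ω x))
    (by simpa only [fun t => measureReal_Iic_weightMeasure (hfin t) hω] using hgrowth) a b
  rw [measureReal_Icc_laplaceMeasure hδ.le hab.le] at hcorr
  have hlim := hcorr.div_const (δ / 2 * ∫ t in a..b, exp (-δ * |t|))
  rw [div_self (by positivity)] at hlim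
  refine hlim.congr' ?_
  filter_upwards [hnonzero] with T hT
  rw [measureReal_Icc_pairCorrelation_weightMeasure (hfin T) hω hT, div_div, mul_left_comm,
    ← mul_assoc]

/-- Corollary 1.2: asymptotics of the weighted number of pairs of elements of
`𝓔 ∩ [0, N]` whose difference lies in `[a, b]`. -/
theorem pair_count_asymptotics
    (E : Set ℝ) (hE : E ⊆ Set.Ici 0) (hfin : ∀ t : ℝ, (E ∩ Set.Iic t).Finite)
    (ω : ℝ → ℝ) (hω : ∀ x ∈ E, 0 < ω x)
    (c δ α : ℝ) (hc : 0 < c) (hδ : 0 < δ)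
    (hPA : Tendsto
      (fun t : ℝ => (∑ x ∈ (hfin t).toFinset, ω x) / (c * t ^ α * Real.exp (δ * t)))
      atTop (nhds 1))
    (a b : ℝ) (hab : a < b) :
    Tendsto (fun N : ℕ =>
        (∑ x ∈ (hfin N).toFinset, ∑ y ∈ (hfin N).toFinset,
            if a ≤ y - x ∧ y - x ≤ b then ω x * ω y else 0) /
          (δ / 2 * (∑ x ∈ (hfin N).toFinset, ω x) ^ 2 *
            ∫ t in a..b, Real.exp (-δ * |t|)))
      atTop (nhds 1) :=
  (pair_count_asymptotics_general hfin (fun x hx => (hω x hx).le) hδ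
    (tendsto_shift_div_of_tendsto_div_rpow_mul_exp hc.ne' hPA) hab).comp tendsto_natCast_atTop_atTop
end

section
/- Let 𝓔 be a locally finite subset of [0,∞) with weight function ω, and suppose ω̃(t) = Σ_{x∈𝓔,x≤t} ω(x) satisfies ω̃(t) = c e^{δt}(1 + O(e^{-κt})) as t → ∞ for some c, δ, κ > 0. Let ψ : ℕ → [1,∞) tend to +∞ with subexponential growth. For N ∈ ℕ define 𝓡_N^ψ(f) = Σ_{x,y∈𝓔∩[0,N]} ω(x)ω(y) f(ψ(N)(y-x)) and ψ'(N) = ω̃(N)²/ψ(N). Then for every C¹ function f : ℝ → ℝ with compact support, 𝓡_N^ψ(f)/ψ'(N) → (δ/2) ∫_ℝ f(t) dt as N → ∞. -/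
open Filter Real

/-! Up to height `T` the counting function `F` stays within `B = O(1 + exp ((δ - κ) * T))` of
`c * exp (δ * t)`. For `h ≤ 0` every shifted point `x + h` still lies below `T`, so the weight of
the pairs with `y - x ≤ h`, namely `∑ x, ω x * F (x + h)`, equals `exp (δ * h) * K` up to
`B * F T`, where `K = c * ∑ x, ω x * exp (δ * x)` does not depend on `h`. Since exchanging `x` and
`y` reflects `h` at `0`, the case `h = 0` forces `K ≈ (F T) ^ 2 / 2`, and the case `h > 0` follows
too: the normalised differences `y - x` have the Laplace distribution function of rate `δ` up to
`O(B / F T)`. The Laplace density at `0` is `δ / 2`, and after zooming in by the factor `ψ` the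
error is still negligible, so the mass of `(a, b]` tends to `δ / 2 * (b - a)`. This convergence on
intervals passes to continuous compactly supported test functions. -/

open MeasureTheory Set Topology

section VagueConvergence

theorem abs_integral_sub_sum_le {ν : Measure ℝ} [IsLocallyFiniteMeasure ν] {f : ℝ → ℝ}
    (hf : Continuous f) {a : ℕ → ℝ} (ha : Monotone a) {n : ℕ} {ε : ℝ}
    (hsupp : f.support ⊆ Ioc (a 0) (a n))
    (hosc : ∀ k, ∀ x ∈ Ioc (a k) (a (k + 1)), |f x - f (a (k + 1))| ≤ ε) :
    |∫ x, f x ∂ν - ∑ k ∈ Finset.range n, f (a (k + 1)) * ν.real (Ioc (a k) (a (k + 1)))| ≤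
      ε * ν.real (Ioc (a 0) (a n)) := by
  have hstep (k : ℕ) : a k ≤ a (k + 1) := ha k.le_succ
  have hsplit {g : ℝ → ℝ} (hg : Continuous g) :
      ∫ x in a 0..a n, g x ∂ν = ∑ k ∈ Finset.range n, ∫ x in Ioc (a k) (a (k + 1)), g x ∂ν := by
    rw [← intervalIntegral.sum_integral_adjacent_intervals
      fun k _ ↦ hg.intervalIntegrable (a k) (a (k + 1))]
    exact Finset.sum_congr rfl fun k _ ↦ intervalIntegral.integral_of_le (hstep k)
  have htotal : ν.real (Ioc (a 0) (a n)) =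
      ∑ k ∈ Finset.range n, ν.real (Ioc (a k) (a (k + 1))) := by
    simpa [intervalIntegral.integral_of_le (ha n.zero_le)] using
      hsplit (continuous_const (y := (1 : ℝ)))
  have hpiece (k : ℕ) : |∫ x in Ioc (a k) (a (k + 1)), f x ∂ν -
      f (a (k + 1)) * ν.real (Ioc (a k) (a (k + 1)))| ≤
        ε * ν.real (Ioc (a k) (a (k + 1))) := by
    have hint : IntegrableOn f (Ioc (a k) (a (k + 1))) ν := hf.integrableOn_Ioc
    have hconst : IntegrableOn (fun _ ↦ f (a (k + 1))) (Ioc (a k) (a (k + 1))) ν :=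
      continuous_const.integrableOn_Ioc
    have hsub := integral_sub hint hconst
    rw [setIntegral_const, smul_eq_mul, mul_comm] at hsub
    rw [← hsub]
    exact norm_setIntegral_le_of_norm_le_const (f := fun x ↦ f x - f (a (k + 1)))
      measure_Ioc_lt_top (hosc k)
  rw [← intervalIntegral.integral_eq_integral_of_support_subset hsupp, hsplit hf,
    ← Finset.sum_sub_distrib, htotal, Finset.mul_sum]
  exact (Finset.abs_sum_le_sum_abs _ _).trans (Finset.sum_le_sum fun k _ ↦ hpiece k)

theorem exists_monotone_partition {f : ℝ → ℝ} (hf : UniformContinuous f) {b c : ℝ} (hbc : b ≤ c)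
    {ε : ℝ} (hε : 0 < ε) :
    ∃ (a : ℕ → ℝ) (n : ℕ), Monotone a ∧ a 0 = b ∧ a n = c ∧
      ∀ k, ∀ x ∈ Ioc (a k) (a (k + 1)), |f x - f (a (k + 1))| ≤ ε := by
  obtain ⟨η, hη, hunif⟩ := Metric.uniformContinuous_iff.1 hf ε hε
  obtain ⟨n, hn⟩ := exists_nat_gt ((c - b) / η)
  have hn0 : (0 : ℝ) < n := (div_nonneg (sub_nonneg.2 hbc) hη.le).trans_lt hn
  have hmesh : (c - b) / n < η := (div_lt_comm₀ hη hn0).1 hn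
  have hmesh0 : 0 ≤ (c - b) / n := div_nonneg (sub_nonneg.2 hbc) hn0.le
  refine ⟨fun k ↦ b + k * ((c - b) / n), n,
    monotone_const.add (Nat.mono_cast.mul_const hmesh0), by simp, ?_, fun k x hx ↦ ?_⟩
  · field_simp
    ring
  · push_cast at hx ⊢
    have hdist : dist x (b + (k + 1) * ((c - b) / n)) < η := by
      rw [Real.dist_eq, abs_lt]
      constructor <;> linarith [hx.1, hx.2]
    exact (hunif hdist).le

theorem tendsto_integral_of_tendsto_measureReal_Ioc {ι : Type*} {l : Filter ι}
    {ν : ι → Measure ℝ} [∀ i, IsLocallyFiniteMeasure (ν i)] {μ : Measure ℝ}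
    [IsLocallyFiniteMeasure μ]
    (h : ∀ a b, a ≤ b → Tendsto (fun i ↦ (ν i).real (Ioc a b)) l (𝓝 (μ.real (Ioc a b))))
    {f : ℝ → ℝ} (hf : Continuous f) (hcs : HasCompactSupport f) :
    Tendsto (fun i ↦ ∫ x, f x ∂ν i) l (𝓝 (∫ x, f x ∂μ)) := by
  rw [Metric.tendsto_nhds]
  intro ε hε
  obtain ⟨R, hR, hzero⟩ := hcs.exists_pos_le_norm
  have hsupp : f.support ⊆ Ioc (-R) R := fun x hx ↦
    Ioo_subset_Ioc_self (abs_lt.1 (not_le.1 fun h ↦ hx (hzero x h)))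
  set m := μ.real (Ioc (-R) R)
  have hm : 0 ≤ m := measureReal_nonneg
  obtain ⟨a, n, ha, ha0, han, hosc⟩ := exists_monotone_partition
    (hcs.uniformContinuous_of_continuous hf) (by linarith : -R ≤ R)
    (by positivity : 0 < ε / (4 * (m + 1)))
  have hmass : ∀ᶠ i in l, (ν i).real (Ioc (-R) R) < m + 1 :=
    (h _ _ (by linarith)).eventually_lt_const (lt_add_one m)
  have hsums := tendsto_finsetSum (Finset.range n) fun k _ ↦
    (h _ _ (ha k.le_succ)).const_mul (f (a (k + 1)))
  have herr (ρ : Measure ℝ) [IsLocallyFiniteMeasure ρ] (hρ : ρ.real (Ioc (-R) R) ≤ m + 1) :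
      |∫ x, f x ∂ρ - ∑ k ∈ Finset.range n, f (a (k + 1)) * ρ.real (Ioc (a k) (a (k + 1)))| ≤
        ε / 4 := by
    rw [← ha0, ← han] at hsupp hρ
    refine (abs_integral_sub_sum_le hf ha hsupp hosc).trans ?_
    calc ε / (4 * (m + 1)) * ρ.real (Ioc (a 0) (a n)) ≤ ε / (4 * (m + 1)) * (m + 1) := by gcongr
      _ = ε / 4 := by field_simp
  filter_upwards [hmass, Metric.tendsto_nhds.1 hsums (ε / 2) (by positivity)] with i hi hdist
  rw [Real.dist_eq, abs_lt] at hdist ⊢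
  have hν := abs_le.1 (herr (ν i) hi.le)
  have hμ := abs_le.1 (herr μ (lt_add_one m).le)
  constructor <;> linarith [hν.1, hν.2, hμ.1, hμ.2, hdist.1, hdist.2]

theorem integral_sum_ofReal_smul_dirac {α : Type*} {s : Finset α} {w u : α → ℝ}
    (hw : ∀ z ∈ s, 0 ≤ w z) (g : ℝ → ℝ) :
    ∫ x, g x ∂(∑ z ∈ s, ENNReal.ofReal (w z) • Measure.dirac (u z)) =
      ∑ z ∈ s, w z * g (u z) := by
  have hint : ∀ z ∈ s, Integrable g (ENNReal.ofReal (w z) • Measure.dirac (u z)) := fun z _ ↦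
    (integrable_dirac (by simp)).smul_measure ENNReal.ofReal_ne_top
  rw [integral_finsetSum_measure hint]
  refine Finset.sum_congr rfl fun z hz ↦ ?_
  rw [integral_smul_measure, integral_dirac, ENNReal.toReal_ofReal (hw z hz), smul_eq_mul]

theorem tendsto_sum_mul_of_tendsto_sum_Ioc {ι α : Type*} {l : Filter ι} {s : ι → Finset α}
    {w u : ι → α → ℝ} (hw : ∀ᶠ i in l, ∀ z ∈ s i, 0 ≤ w i z) {μ : Measure ℝ}
    [IsLocallyFiniteMeasure μ]
    (h : ∀ a b, a ≤ b → Tendsto (fun i ↦ ∑ z ∈ s i with u i z ∈ Ioc a b, w i z) l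
      (𝓝 (μ.real (Ioc a b))))
    {f : ℝ → ℝ} (hf : Continuous f) (hcs : HasCompactSupport f) :
    Tendsto (fun i ↦ ∑ z ∈ s i, w i z * f (u i z)) l (𝓝 (∫ x, f x ∂μ)) := by
  let ν (i : ι) : Measure ℝ := ∑ z ∈ s i, ENNReal.ofReal (w i z) • Measure.dirac (u i z)
  have hfin (i : ι) : IsFiniteMeasure (ν i) := by
    refine ⟨?_⟩
    simp [ν]
  have hν : ∀ a b, a ≤ b → Tendsto (fun i ↦ (ν i).real (Ioc a b)) l (𝓝 (μ.real (Ioc a b))) := by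
    refine fun a b hab ↦ (h a b hab).congr' ?_
    filter_upwards [hw] with i hi
    rw [← integral_indicator_one measurableSet_Ioc, integral_sum_ofReal_smul_dirac hi,
      Finset.sum_filter]
    simp [indicator_apply]
  refine (tendsto_integral_of_tendsto_measureReal_Ioc hν hf hcs).congr' ?_
  filter_upwards [hw] with i hi using integral_sum_ofReal_smul_dirac hi f

end VagueConvergence

section LaplaceDistribution

/-- The distribution function of the Laplace law of rate `δ`, the law of the difference of two
independent exponential variables of rate `δ`. -/
noncomputable def laplaceCDF (δ h : ℝ) : ℝ :=
  if h ≤ 0 then exp (δ * h) / 2 else 1 - exp (-(δ * h)) / 2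

theorem laplaceCDF_of_nonpos (δ : ℝ) {h : ℝ} (hh : h ≤ 0) :
    laplaceCDF δ h = exp (δ * h) / 2 :=
  if_pos hh

theorem laplaceCDF_of_nonneg (δ : ℝ) {h : ℝ} (hh : 0 ≤ h) :
    laplaceCDF δ h = 1 - exp (-(δ * h)) / 2 := by
  rcases hh.eq_or_lt with rfl | hpos
  · norm_num [laplaceCDF]
  · exact if_neg hpos.not_ge

theorem hasDerivAt_laplaceCDF_zero (δ : ℝ) : HasDerivAt (laplaceCDF δ) (δ / 2) 0 := by
  have hlin : HasDerivAt (fun h ↦ δ * h) δ 0 := by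
    simpa using (hasDerivAt_id (0 : ℝ)).const_mul δ
  have hleft : HasDerivAt (fun h ↦ exp (δ * h) / 2) (δ / 2) 0 := by
    simpa using hlin.exp.div_const 2
  have hright : HasDerivAt (fun h ↦ 1 - exp (-(δ * h)) / 2) (δ / 2) 0 := by
    simpa [neg_div] using (hlin.neg.exp.div_const 2).const_sub 1
  rw [← hasDerivWithinAt_univ, ← Iic_union_Ici (a := (0 : ℝ))]
  exact (hleft.hasDerivWithinAt.congr (fun _ ↦ laplaceCDF_of_nonpos δ)
      (laplaceCDF_of_nonpos δ le_rfl)).union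
    (hright.hasDerivWithinAt.congr (fun _ ↦ laplaceCDF_of_nonneg δ)
      (laplaceCDF_of_nonneg δ le_rfl))

theorem tendsto_mul_laplaceCDF_sub {ι : Type*} {l : Filter ι} {ψ : ι → ℝ}
    (hψ : Tendsto ψ l atTop) (δ v : ℝ) :
    Tendsto (fun i ↦ ψ i * (laplaceCDF δ (v / ψ i) - 1 / 2)) l (𝓝 (δ / 2 * v)) := by
  have hslope := ((hasDerivAt_laplaceCDF_zero δ).hasFDerivAt.lim_real v).comp hψ
  simpa [Function.comp_def, laplaceCDF_of_nonpos, div_eq_inv_mul, mul_comm v] using hslope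

end LaplaceDistribution

section PairCorrelation

variable {s : Finset ℝ} {ω : ℝ → ℝ} {T c δ B : ℝ}

/-- The total weight `ω x * ω y` of the ordered pairs `(x, y)` of points of `s` with
`y - x ≤ h`. -/
noncomputable def pairCDF (s : Finset ℝ) (ω : ℝ → ℝ) (h : ℝ) : ℝ :=
  ∑ z ∈ s ×ˢ s with z.2 - z.1 ≤ h, ω z.1 * ω z.2

theorem pairCDF_eq_sum_mul (s : Finset ℝ) (ω : ℝ → ℝ) (h : ℝ) :
    pairCDF s ω h = ∑ x ∈ s, ω x * ∑ y ∈ s with y ≤ x + h, ω y := by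
  simp only [pairCDF, Finset.sum_filter, Finset.sum_product, Finset.mul_sum, mul_ite, mul_zero,
    sub_le_iff_le_add']

theorem pairCDF_add_sum_mul_lt (s : Finset ℝ) (ω : ℝ → ℝ) (h : ℝ) :
    pairCDF s ω h + ∑ x ∈ s, ω x * ∑ y ∈ s with y < x + -h, ω y = (∑ x ∈ s, ω x) ^ 2 := by
  have hswap : ∑ x ∈ s, ω x * ∑ y ∈ s with y < x + -h, ω y =
      ∑ x ∈ s, ω x * ∑ y ∈ s with ¬ y ≤ x + h, ω y := by
    simp only [Finset.sum_filter, Finset.mul_sum]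
    rw [Finset.sum_comm]
    refine Finset.sum_congr rfl fun x _ ↦ Finset.sum_congr rfl fun y _ ↦ ?_
    simp only [not_le, ← sub_eq_add_neg, lt_sub_iff_add_lt, mul_ite, mul_zero,
      mul_comm (ω x) (ω y)]
  rw [pairCDF_eq_sum_mul, hswap, ← Finset.sum_add_distrib, sq, Finset.sum_mul]
  exact Finset.sum_congr rfl fun x _ ↦ by
    rw [← mul_add, Finset.sum_filter_add_sum_filter_not]

theorem sum_filter_mem_Ioc_eq_pairCDF_sub (s : Finset ℝ) (ω : ℝ → ℝ) {p a b : ℝ} (hp : 0 < p)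
    (hab : a ≤ b) :
    ∑ z ∈ s ×ˢ s with p * (z.2 - z.1) ∈ Ioc a b, ω z.1 * ω z.2 =
      pairCDF s ω (b / p) - pairCDF s ω (a / p) := by
  simp only [pairCDF, Finset.sum_filter, ← Finset.sum_sub_distrib, mem_Ioc]
  refine Finset.sum_congr rfl fun z _ ↦ ?_
  have ha : z.2 - z.1 ≤ a / p ↔ p * (z.2 - z.1) ≤ a := le_div_iff₀' hp
  have hb : z.2 - z.1 ≤ b / p ↔ p * (z.2 - z.1) ≤ b := le_div_iff₀' hp
  simp only [ha, hb]
  grind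

/-- The nonnegatively weighted points of `s` lie in `(-∞, T]`, where their counting function
stays within `B` of `c * exp (δ * t)`. -/
structure HasExpCounting (s : Finset ℝ) (ω : ℝ → ℝ) (T c δ B : ℝ) : Prop where
  weight_nonneg : ∀ x ∈ s, 0 ≤ ω x
  le_top : ∀ x ∈ s, x ≤ T
  abs_sum_le_sub_le : ∀ t ≤ T, |∑ x ∈ s with x ≤ t, ω x - c * exp (δ * t)| ≤ B

namespace HasExpCounting

theorem error_nonneg (hs : HasExpCounting s ω T c δ B) : 0 ≤ B :=
  (abs_nonneg _).trans (hs.abs_sum_le_sub_le T le_rfl)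

theorem abs_sum_sub_le (hs : HasExpCounting s ω T c δ B) :
    |∑ x ∈ s, ω x - c * exp (δ * T)| ≤ B := by
  simpa only [Finset.filter_true_of_mem hs.le_top] using hs.abs_sum_le_sub_le T le_rfl

theorem abs_sum_lt_sub_le (hs : HasExpCounting s ω T c δ B) {t : ℝ} (ht : t ≤ T) :
    |∑ x ∈ s with x < t, ω x - c * exp (δ * t)| ≤ B := by
  -- The strict counting function is the left limit of the nonstrict one.
  have hfilter : ∀ᶠ u in 𝓝[<] t, ∀ x ∈ s, x ≤ u ↔ x < t := by
    refine (s.eventually_all).2 fun x _ ↦ ?_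
    by_cases hxt : x < t
    · filter_upwards [Ioo_mem_nhdsLT hxt] with u hu using iff_of_true hu.1.le hxt
    · filter_upwards [self_mem_nhdsWithin] with u hu
      exact iff_of_false (fun hxu ↦ hxt (hxu.trans_lt hu)) hxt
  have hlim : Tendsto (fun u ↦ |∑ x ∈ s with x < t, ω x - c * exp (δ * u)|) (𝓝[<] t)
      (𝓝 |∑ x ∈ s with x < t, ω x - c * exp (δ * t)|) :=
    (Continuous.tendsto (by fun_prop) t).mono_left nhdsWithin_le_nhds
  refine le_of_tendsto hlim ?_
  filter_upwards [hfilter, self_mem_nhdsWithin] with u hu hut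
  rw [← Finset.filter_congr hu]
  exact hs.abs_sum_le_sub_le u (hut.le.trans ht)

theorem abs_sum_mul_comp_add_sub_le (hs : HasExpCounting s ω T c δ B) {G : ℝ → ℝ}
    (hG : ∀ t ≤ T, |G t - c * exp (δ * t)| ≤ B) {h : ℝ} (hh : h ≤ 0) :
    |∑ x ∈ s, ω x * G (x + h) - exp (δ * h) * (c * ∑ x ∈ s, ω x * exp (δ * x))| ≤
      B * ∑ x ∈ s, ω x := by
  have hsplit : ∑ x ∈ s, ω x * G (x + h) - exp (δ * h) * (c * ∑ x ∈ s, ω x * exp (δ * x)) =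
      ∑ x ∈ s, ω x * (G (x + h) - c * exp (δ * (x + h))) := by
    simp only [Finset.mul_sum, ← Finset.sum_sub_distrib, mul_add, exp_add]
    exact Finset.sum_congr rfl fun x _ ↦ by ring
  rw [hsplit, Finset.mul_sum]
  refine (Finset.abs_sum_le_sum_abs _ _).trans (Finset.sum_le_sum fun x hx ↦ ?_)
  rw [abs_mul, abs_of_nonneg (hs.weight_nonneg x hx), mul_comm B]
  exact mul_le_mul_of_nonneg_left (hG _ (by linarith [hs.le_top x hx])) (hs.weight_nonneg x hx)

theorem abs_sum_mul_exp_sub_le (hs : HasExpCounting s ω T c δ B) :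
    |c * ∑ x ∈ s, ω x * exp (δ * x) - (∑ x ∈ s, ω x) ^ 2 / 2| ≤ B * ∑ x ∈ s, ω x := by
  have hle := hs.abs_sum_mul_comp_add_sub_le hs.abs_sum_le_sub_le le_rfl
  have hlt := hs.abs_sum_mul_comp_add_sub_le (fun _ ↦ hs.abs_sum_lt_sub_le) le_rfl
  have hsq := pairCDF_add_sum_mul_lt s ω 0
  rw [pairCDF_eq_sum_mul] at hsq
  simp only [mul_zero, exp_zero, one_mul, neg_zero] at hle hlt hsq
  rw [abs_le] at hle hlt ⊢
  constructor <;> linarith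

theorem abs_sum_mul_comp_add_sub_sq_le (hs : HasExpCounting s ω T c δ B) (hδ : 0 ≤ δ)
    {G : ℝ → ℝ} (hG : ∀ t ≤ T, |G t - c * exp (δ * t)| ≤ B) {h : ℝ} (hh : h ≤ 0) :
    |∑ x ∈ s, ω x * G (x + h) - (∑ x ∈ s, ω x) ^ 2 * (exp (δ * h) / 2)| ≤
      2 * (B * ∑ x ∈ s, ω x) := by
  have hexp : exp (δ * h) ≤ 1 := exp_le_one_iff.2 (mul_nonpos_of_nonneg_of_nonpos hδ hh)
  calc _ = |(∑ x ∈ s, ω x * G (x + h) - exp (δ * h) * (c * ∑ x ∈ s, ω x * exp (δ * x))) +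
        exp (δ * h) * (c * ∑ x ∈ s, ω x * exp (δ * x) - (∑ x ∈ s, ω x) ^ 2 / 2)| := by
        congr 1
        ring
    _ ≤ B * ∑ x ∈ s, ω x + 1 * (B * ∑ x ∈ s, ω x) := by
        refine (abs_add_le _ _).trans (add_le_add (hs.abs_sum_mul_comp_add_sub_le hG hh) ?_)
        rw [abs_mul, abs_exp]
        exact mul_le_mul hexp hs.abs_sum_mul_exp_sub_le (abs_nonneg _) zero_le_one
    _ = 2 * (B * ∑ x ∈ s, ω x) := by ring

theorem abs_pairCDF_sub_le (hs : HasExpCounting s ω T c δ B) (hδ : 0 ≤ δ) (h : ℝ) :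
    |pairCDF s ω h - (∑ x ∈ s, ω x) ^ 2 * laplaceCDF δ h| ≤ 2 * (B * ∑ x ∈ s, ω x) := by
  rcases le_total h 0 with hh | hh
  · rw [pairCDF_eq_sum_mul, laplaceCDF_of_nonpos δ hh]
    exact hs.abs_sum_mul_comp_add_sub_sq_le hδ hs.abs_sum_le_sub_le hh
  · have hlt := hs.abs_sum_mul_comp_add_sub_sq_le hδ (fun _ ↦ hs.abs_sum_lt_sub_le)
      (neg_nonpos.2 hh)
    rw [eq_sub_of_add_eq (pairCDF_add_sum_mul_lt s ω h), laplaceCDF_of_nonneg δ hh, abs_sub_comm]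
    rw [mul_neg] at hlt
    convert hlt using 2
    ring

end HasExpCounting

section Asymptotics

variable {ι : Type*} {l : Filter ι} {s : ι → Finset ℝ} {T B ψ : ι → ℝ}

theorem eventually_half_mul_exp_le_sum (hs : ∀ i, HasExpCounting (s i) ω (T i) c δ (B i))
    (hc : 0 < c) (hψ : Tendsto ψ l atTop)
    (hψB : Tendsto (fun i ↦ ψ i * (B i / exp (δ * T i))) l (𝓝 0)) :
    ∀ᶠ i in l, c / 2 * exp (δ * T i) ≤ ∑ x ∈ s i, ω x := by
  filter_upwards [hψ.eventually_ge_atTop 1, hψB.eventually_lt_const (half_pos hc)] with i hψ1 hi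
  have hB : B i / exp (δ * T i) ≤ c / 2 :=
    (le_mul_of_one_le_left (div_nonneg (hs i).error_nonneg (exp_pos _).le) hψ1).trans hi.le
  rw [div_le_iff₀ (exp_pos _)] at hB
  linarith [abs_le.1 (hs i).abs_sum_sub_le]

theorem tendsto_mul_pairCDF_div_sub (hs : ∀ i, HasExpCounting (s i) ω (T i) c δ (B i))
    (hc : 0 < c) (hδ : 0 ≤ δ) (hψ : Tendsto ψ l atTop)
    (hψB : Tendsto (fun i ↦ ψ i * (B i / exp (δ * T i))) l (𝓝 0)) (v : ℝ) :
    Tendsto (fun i ↦ ψ i * (pairCDF (s i) ω (v / ψ i) / (∑ x ∈ s i, ω x) ^ 2 - 1 / 2)) l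
      (𝓝 (δ / 2 * v)) := by
  have herror : Tendsto (fun i ↦ ψ i * (pairCDF (s i) ω (v / ψ i) / (∑ x ∈ s i, ω x) ^ 2 -
      laplaceCDF δ (v / ψ i))) l (𝓝 0) := by
    refine squeeze_zero_norm' ?_ (by simpa only [mul_zero] using hψB.const_mul (4 / c))
    filter_upwards [hψ.eventually_ge_atTop 0, eventually_half_mul_exp_le_sum hs hc hψ hψB]
      with i hψ0 hF
    have hF0 : 0 < ∑ x ∈ s i, ω x := lt_of_lt_of_le (by positivity) hF
    have hB0 := (hs i).error_nonneg
    have hpair := (hs i).abs_pairCDF_sub_le hδ (v / ψ i)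
    set F := ∑ x ∈ s i, ω x
    rw [norm_mul, norm_eq_abs, norm_eq_abs, abs_of_nonneg hψ0]
    calc ψ i * |pairCDF (s i) ω (v / ψ i) / F ^ 2 - laplaceCDF δ (v / ψ i)|
        = ψ i * (|pairCDF (s i) ω (v / ψ i) - F ^ 2 * laplaceCDF δ (v / ψ i)| / F ^ 2) := by
          rw [← abs_of_pos (pow_pos hF0 2), ← abs_div, abs_of_pos (pow_pos hF0 2), sub_div,
            mul_div_cancel_left₀ _ (pow_pos hF0 2).ne']
      _ ≤ ψ i * (2 * (B i * F) / F ^ 2) := by gcongr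
      _ = ψ i * (2 * B i / F) := by field_simp
      _ ≤ ψ i * (2 * B i / (c / 2 * exp (δ * T i))) := by gcongr
      _ = 4 / c * (ψ i * (B i / exp (δ * T i))) := by field_simp; ring
  simpa [← mul_add] using herror.add (tendsto_mul_laplaceCDF_sub hψ δ v)

theorem tendsto_pairCorrelation_s10 (hs : ∀ i, HasExpCounting (s i) ω (T i) c δ (B i))
    (hc : 0 < c) (hδ : 0 ≤ δ) (hψ : Tendsto ψ l atTop)
    (hψB : Tendsto (fun i ↦ ψ i * (B i / exp (δ * T i))) l (𝓝 0))
    {f : ℝ → ℝ} (hf : Continuous f) (hcs : HasCompactSupport f) :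
    Tendsto (fun i ↦ (∑ x ∈ s i, ∑ y ∈ s i, ω x * ω y * f (ψ i * (y - x))) /
      ((∑ x ∈ s i, ω x) ^ 2 / ψ i)) l (𝓝 (δ / 2 * ∫ t, f t)) := by
  let w (i : ι) (z : ℝ × ℝ) : ℝ := ω z.1 * ω z.2 / ((∑ x ∈ s i, ω x) ^ 2 / ψ i)
  let μ : Measure ℝ := (δ / 2).toNNReal • volume
  have hδ2 : 0 ≤ δ / 2 := by positivity
  have hw : ∀ᶠ i in l, ∀ z ∈ s i ×ˢ s i, 0 ≤ w i z := by
    filter_upwards [hψ.eventually_ge_atTop 0] with i hψ0 z hz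
    rw [Finset.mem_product] at hz
    have hx := (hs i).weight_nonneg _ hz.1
    have hy := (hs i).weight_nonneg _ hz.2
    positivity
  have hIoc (a b : ℝ) (hab : a ≤ b) :
      Tendsto (fun i ↦ ∑ z ∈ s i ×ˢ s i with ψ i * (z.2 - z.1) ∈ Ioc a b, w i z) l
        (𝓝 (μ.real (Ioc a b))) := by
    have hμ : μ.real (Ioc a b) = δ / 2 * b - δ / 2 * a := by
      simp [μ, hab, hδ2, mul_sub]
    rw [hμ]
    refine ((tendsto_mul_pairCDF_div_sub hs hc hδ hψ hψB b).sub
      (tendsto_mul_pairCDF_div_sub hs hc hδ hψ hψB a)).congr' ?_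
    filter_upwards [hψ.eventually_gt_atTop 0] with i hψ0
    rw [← Finset.sum_div, sum_filter_mem_Ioc_eq_pairCDF_sub _ _ hψ0 hab, div_div_eq_mul_div]
    ring
  have hlim := tendsto_sum_mul_of_tendsto_sum_Ioc hw hIoc hf hcs
  rw [integral_smul_nnreal_measure, NNReal.smul_def, Real.coe_toNNReal _ hδ2, smul_eq_mul] at hlim
  refine hlim.congr fun i ↦ ?_
  rw [Finset.sum_product, Finset.sum_div]
  refine Finset.sum_congr rfl fun x _ ↦ ?_
  rw [Finset.sum_div]
  exact Finset.sum_congr rfl fun y _ ↦ div_mul_eq_mul_div _ _ _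

end Asymptotics

end PairCorrelation

theorem exists_abs_sub_mul_exp_le {G : ℝ → ℝ} (hmono : Monotone G) (hG : ∀ t, 0 ≤ G t)
    {c δ κ : ℝ} (hc : 0 ≤ c) (hδ : 0 ≤ δ)
    (h : ∃ C t₀, ∀ t ≥ t₀, |G t - c * exp (δ * t)| ≤ C * exp ((δ - κ) * t)) :
    ∃ D C, ∀ T, ∀ t ≤ T, |G t - c * exp (δ * t)| ≤ D + C * exp ((δ - κ) * T) := by
  obtain ⟨C, t₀, h⟩ := h
  have hC : 0 ≤ C := nonneg_of_mul_nonneg_left ((abs_nonneg _).trans (h t₀ le_rfl)) (exp_pos _)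
  have hG₀ := hG t₀
  refine ⟨G t₀ + c * exp (δ * t₀) + C * exp ((δ - κ) * t₀), C, fun T t htT ↦ ?_⟩
  rcases lt_or_ge t t₀ with ht | ht
  · have hGt := hmono ht.le
    have hexp : c * exp (δ * t) ≤ c * exp (δ * t₀) := by gcongr
    have hexp0 : 0 ≤ c * exp (δ * t) := by positivity
    have hT : 0 ≤ C * exp ((δ - κ) * T) := by positivity
    have ht₀ : 0 ≤ C * exp ((δ - κ) * t₀) := by positivity
    rw [abs_le]
    constructor <;> linarith [hG t]
  · have hexp : exp ((δ - κ) * t) ≤ exp ((δ - κ) * t₀) + exp ((δ - κ) * T) := by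
      rcases le_total 0 (δ - κ) with hsign | hsign
      · have := exp_le_exp.2 (mul_le_mul_of_nonneg_left htT hsign)
        linarith [exp_pos ((δ - κ) * t₀)]
      · have := exp_le_exp.2 (mul_le_mul_of_nonpos_left ht hsign)
        linarith [exp_pos ((δ - κ) * T)]
    calc |G t - c * exp (δ * t)| ≤ C * exp ((δ - κ) * t) := h t ht
      _ ≤ C * (exp ((δ - κ) * t₀) + exp ((δ - κ) * T)) := by gcongr
      _ ≤ _ := by
        have : 0 ≤ c * exp (δ * t₀) := by positivity
        linarith

theorem poissonian_behaviour_general {ι : Type*} {l : Filter ι}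
    {E : Set ℝ} (hfin : ∀ t : ℝ, (E ∩ Iic t).Finite)
    {ω : ℝ → ℝ} (hω : ∀ x ∈ E, 0 ≤ ω x) {c δ κ : ℝ} (hc : 0 < c) (hδ : 0 ≤ δ)
    (hET : ∃ C t₀, ∀ t ≥ t₀,
      |∑ x ∈ (hfin t).toFinset, ω x - c * exp (δ * t)| ≤ C * exp ((δ - κ) * t))
    {T ψ : ι → ℝ} (hψ : Tendsto ψ l atTop)
    (hψδ : Tendsto (fun i ↦ ψ i / exp (δ * T i)) l (𝓝 0))
    (hψκ : Tendsto (fun i ↦ ψ i / exp (κ * T i)) l (𝓝 0))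
    {f : ℝ → ℝ} (hf : Continuous f) (hcs : HasCompactSupport f) :
    Tendsto (fun i ↦
        (∑ x ∈ (hfin (T i)).toFinset, ∑ y ∈ (hfin (T i)).toFinset,
          ω x * ω y * f (ψ i * (y - x))) / ((∑ x ∈ (hfin (T i)).toFinset, ω x) ^ 2 / ψ i))
      l (𝓝 (δ / 2 * ∫ t, f t)) := by
  have hmono : Monotone fun t ↦ ∑ x ∈ (hfin t).toFinset, ω x := fun t u htu ↦
    Finset.sum_le_sum_of_subset_of_nonneg
      (Finite.toFinset_subset_toFinset.2 (inter_subset_inter_right E (Iic_subset_Iic.2 htu)))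
      fun x hx _ ↦ hω x ((hfin u).mem_toFinset.1 hx).1
  have hnonneg (t : ℝ) : 0 ≤ ∑ x ∈ (hfin t).toFinset, ω x :=
    Finset.sum_nonneg fun x hx ↦ hω x ((hfin t).mem_toFinset.1 hx).1
  obtain ⟨D, C, hbound⟩ := exists_abs_sub_mul_exp_le hmono hnonneg hc.le hδ hET
  have hs (i : ι) : HasExpCounting (hfin (T i)).toFinset ω (T i) c δ
      (D + C * exp ((δ - κ) * T i)) := by
    refine ⟨fun x hx ↦ hω x ((hfin _).mem_toFinset.1 hx).1,
      fun x hx ↦ ((hfin _).mem_toFinset.1 hx).2, fun t ht ↦ ?_⟩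
    have hfilter : {x ∈ (hfin (T i)).toFinset | x ≤ t} = (hfin t).toFinset := by
      ext x
      simp only [Finset.mem_filter, Set.Finite.mem_toFinset, mem_inter_iff, mem_Iic]
      grind
    rw [hfilter]
    exact hbound (T i) t ht
  refine tendsto_pairCorrelation_s10 hs hc hδ hψ ?_ hf hcs
  have hlim := (hψδ.const_mul D).add (hψκ.const_mul C)
  rw [mul_zero, mul_zero, add_zero] at hlim
  refine hlim.congr fun i ↦ ?_
  rw [sub_mul, exp_sub]
  field_simp

/-- Theorem 3.1, Poissonian case (`α = 0`, `ψ → ∞` subexponentially):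
the renormalised pair correlations converge to `(δ/2) ∫ f`. -/
theorem poissonian_behaviour
    (E : Set ℝ) (hE : E ⊆ Set.Ici 0) (hfin : ∀ t : ℝ, (E ∩ Set.Iic t).Finite)
    (ω : ℝ → ℝ) (hω : ∀ x ∈ E, 0 < ω x)
    (c δ κ : ℝ) (hc : 0 < c) (hδ : 0 < δ) (hκ : 0 < κ)
    (hET : ∃ C : ℝ, ∃ t0 : ℝ, ∀ t ≥ t0,
      abs ((∑ x ∈ (hfin t).toFinset, ω x) - c * Real.exp (δ * t))
        ≤ C * Real.exp ((δ - κ) * t))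
    (ψ : ℕ → ℝ) (hψ1 : ∀ N, 1 ≤ ψ N) (hψtop : Tendsto ψ atTop atTop)
    (hψsub : ∀ γ > (0:ℝ), Tendsto (fun N : ℕ => ψ N / Real.exp (γ * N)) atTop (nhds 0)) :
    ∀ f : ℝ → ℝ, ContDiff ℝ 1 f → HasCompactSupport f →
      Tendsto (fun N : ℕ =>
          (∑ x ∈ (hfin N).toFinset, ∑ y ∈ (hfin N).toFinset, ω x * ω y * f (ψ N * (y - x))) /
            ((∑ x ∈ (hfin N).toFinset, ω x) ^ 2 / ψ N))
        atTop (nhds (δ / 2 * ∫ t : ℝ, f t)) :=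
  fun _ hf hcs ↦ poissonian_behaviour_general hfin (fun x hx ↦ (hω x hx).le) hc hδ.le hET hψtop
    (hψsub δ hδ) (hψsub κ hκ) hf.continuous hcs
end

section
/- Let 𝓔 be a locally finite subset of [0,∞) with weight function ω and growth function ω̃(t) = Σ_{x∈𝓔,x≤t} ω(x) satisfying ω̃(t) = c e^{δt}(1 + O(e^{-κt})) as t → ∞, with c, δ, κ > 0 and κ ≤ δ. Let A ≥ 1 and let f ∈ C¹(ℝ) have compact support in [-A, A]. Then as N → ∞, (1/ω̃(N)²) Σ_{x,y∈𝓔∩[0,N]} ω(x)ω(y) f(y-x) = ∫_ℝ f(t)(δ/2)e^{-δ|t|} dt + O(A e^{δA} e^{-κN/12} ‖f‖_∞) + O(A e^{-κN/4} ‖f'‖_∞). -/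
open Filter Real

/-!
Normalize the weights of `𝓔 ∩ (-∞, N]` to a probability measure. The growth hypothesis says that
its distribution function is uniformly within `O(e^{-κN})` of that of `N - X`, where `X` is
exponential of rate `δ`. Since `∫ f dμ = -∫ μ((-∞, t]) f'(t) dt` for `f` in `C¹` with compact
support, two measures whose distribution functions differ by at most `D` have integrals of `f`
differing by at most `D ‖f'‖₁`. Applying this in each variable of `f (y - x)` replaces the pair
average by its expectation for two independent copies of `N - X`, whose difference follows the
Laplace law of density `(δ / 2) e^{-δ|t|}`. The resulting error `O(e^{-κN} ‖f'‖₁)` involves only the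
derivative of `f`.
-/

open MeasureTheory ProbabilityTheory Set

section DistributionFunctions

lemma integrable_prod_comp_sub {G : Type*} [NormedAddCommGroup G] {g : ℝ → G}
    {μ ν : Measure ℝ} [IsFiniteMeasure μ] [IsFiniteMeasure ν]
    (hg : Continuous g) (hgc : HasCompactSupport g) :
    Integrable (fun p : ℝ × ℝ ↦ g (p.2 - p.1)) (μ.prod ν) := by
  obtain ⟨B, hB⟩ := hgc.exists_bound_of_continuous hg
  exact .of_bound
    (hg.stronglyMeasurable.comp_measurable (by fun_prop)).aestronglyMeasurable B
    (.of_forall fun p ↦ hB _)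

variable {F : Type*} [NormedAddCommGroup F] [NormedSpace ℝ F] {f : ℝ → F}

lemma integrable_measureReal_Iic_smul (μ : Measure ℝ) [IsFiniteMeasure μ] (hf : Integrable f) :
    Integrable fun t ↦ μ.real (Iic t) • f t := by
  have h_mono : Monotone fun t ↦ μ.real (Iic t) :=
    fun _ _ hst ↦ measureReal_mono (Iic_subset_Iic.2 hst)
  refine hf.bdd_smul (μ.real univ) h_mono.measurable.aestronglyMeasurable (.of_forall fun t ↦ ?_)
  rw [norm_of_nonneg measureReal_nonneg]
  exact measureReal_mono (subset_univ _)

variable [CompleteSpace F]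

lemma integral_integral_Ici (μ : Measure ℝ) [IsFiniteMeasure μ] (hf : Integrable f) :
    ∫ x, (∫ t in Ici x, f t) ∂μ = ∫ t, μ.real (Iic t) • f t := by
  have h_int : Integrable (fun p : ℝ × ℝ ↦ (Ici p.1).indicator f p.2) (μ.prod volume) := by
    have h_eq : (fun p : ℝ × ℝ ↦ (Ici p.1).indicator f p.2) =
        {p : ℝ × ℝ | p.1 ≤ p.2}.indicator fun p ↦ f p.2 := rfl
    rw [h_eq]
    exact (hf.comp_snd μ).indicator (measurableSet_le measurable_fst measurable_snd)
  simp_rw [← integral_indicator measurableSet_Ici]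
  rw [integral_integral_swap h_int]
  refine integral_congr_ae (.of_forall fun t ↦ ?_)
  change ∫ x, (Iic t).indicator (fun _ ↦ f t) x ∂μ = _
  rw [integral_indicator measurableSet_Iic, setIntegral_const]

lemma integral_eq_neg_integral_measureReal_Iic_smul_deriv (μ : Measure ℝ) [IsFiniteMeasure μ]
    (hf : ContDiff ℝ 1 f) (hfc : HasCompactSupport f) :
    ∫ x, f x ∂μ = -∫ t, μ.real (Iic t) • deriv f t := by
  rw [← integral_integral_Ici μ (hf.continuous_deriv_one.integrable_of_hasCompactSupport hfc.deriv),
    ← integral_neg]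
  simp_rw [integral_Ici_eq_integral_Ioi, hfc.integral_Ioi_deriv_eq hf, neg_neg]

variable {μ ν : Measure ℝ} {D : ℝ}

lemma norm_integral_sub_integral_le [IsFiniteMeasure μ] [IsFiniteMeasure ν]
    (hD : ∀ t, |μ.real (Iic t) - ν.real (Iic t)| ≤ D)
    (hf : ContDiff ℝ 1 f) (hfc : HasCompactSupport f) :
    ‖∫ x, f x ∂μ - ∫ x, f x ∂ν‖ ≤ D * ∫ t, ‖deriv f t‖ := by
  have hf' : Integrable (deriv f) :=
    hf.continuous_deriv_one.integrable_of_hasCompactSupport hfc.deriv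
  rw [integral_eq_neg_integral_measureReal_Iic_smul_deriv μ hf hfc,
    integral_eq_neg_integral_measureReal_Iic_smul_deriv ν hf hfc, neg_sub_neg, norm_sub_rev,
    ← integral_sub (integrable_measureReal_Iic_smul μ hf') (integrable_measureReal_Iic_smul ν hf'),
    ← integral_const_mul]
  refine norm_integral_le_of_norm_le (hf'.norm.const_mul D) (.of_forall fun t ↦ ?_)
  rw [← sub_smul, norm_smul]
  gcongr
  exact hD t

lemma norm_integral_comp_sub_const_sub_le [IsFiniteMeasure μ] [IsFiniteMeasure ν]
    (hD : ∀ t, |μ.real (Iic t) - ν.real (Iic t)| ≤ D)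
    (hf : ContDiff ℝ 1 f) (hfc : HasCompactSupport f) (a : ℝ) :
    ‖∫ x, f (x - a) ∂μ - ∫ x, f (x - a) ∂ν‖ ≤ D * ∫ t, ‖deriv f t‖ := by
  have h := norm_integral_sub_integral_le hD (hf.comp (contDiff_id.sub contDiff_const))
    (hfc.comp_homeomorph (Homeomorph.subRight a))
  simpa only [Function.comp_def, id_eq, Homeomorph.coe_subRight, deriv_comp_sub_const,
    integral_sub_right_eq_self (fun t ↦ ‖deriv f t‖)] using h

lemma norm_integral_comp_const_sub_sub_le [IsFiniteMeasure μ] [IsFiniteMeasure ν]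
    (hD : ∀ t, |μ.real (Iic t) - ν.real (Iic t)| ≤ D)
    (hf : ContDiff ℝ 1 f) (hfc : HasCompactSupport f) (a : ℝ) :
    ‖∫ x, f (a - x) ∂μ - ∫ x, f (a - x) ∂ν‖ ≤ D * ∫ t, ‖deriv f t‖ := by
  have h := norm_integral_sub_integral_le hD (hf.comp (contDiff_const.sub contDiff_id))
    (hfc.comp_homeomorph (Homeomorph.subLeft a))
  simpa only [Function.comp_def, id_eq, Homeomorph.coe_subLeft, deriv_comp_const_sub, norm_neg,
    integral_sub_left_eq_self (fun t ↦ ‖deriv f t‖)] using h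

lemma norm_integral_integral_sub_le [IsProbabilityMeasure μ] [IsProbabilityMeasure ν]
    (hD : ∀ t, |μ.real (Iic t) - ν.real (Iic t)| ≤ D)
    (hf : ContDiff ℝ 1 f) (hfc : HasCompactSupport f) :
    ‖∫ x, ∫ y, f (y - x) ∂μ ∂μ - ∫ x, ∫ y, f (y - x) ∂ν ∂ν‖ ≤ 2 * D * ∫ t, ‖deriv f t‖ := by
  have h_inner : ‖∫ x, ∫ y, f (y - x) ∂μ ∂μ - ∫ x, ∫ y, f (y - x) ∂ν ∂μ‖ ≤
      D * ∫ t, ‖deriv f t‖ := by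
    rw [← integral_sub (integrable_prod_comp_sub hf.continuous hfc).integral_prod_left
      (integrable_prod_comp_sub hf.continuous hfc).integral_prod_left]
    simpa only [probReal_univ, mul_one] using norm_integral_le_of_norm_le_const (μ := μ)
      (.of_forall (norm_integral_comp_sub_const_sub_le hD hf hfc))
  have h_outer : ‖∫ x, ∫ y, f (y - x) ∂ν ∂μ - ∫ x, ∫ y, f (y - x) ∂ν ∂ν‖ ≤
      D * ∫ t, ‖deriv f t‖ := by
    have h_swap (ρ : Measure ℝ) [IsFiniteMeasure ρ] :
        ∫ x, ∫ y, f (y - x) ∂ν ∂ρ = ∫ y, ∫ x, f (y - x) ∂ρ ∂ν :=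
      integral_integral_swap (integrable_prod_comp_sub hf.continuous hfc)
    rw [h_swap μ, h_swap ν,
      ← integral_sub (integrable_prod_comp_sub hf.continuous hfc).integral_prod_right
        (integrable_prod_comp_sub hf.continuous hfc).integral_prod_right]
    simpa only [probReal_univ, mul_one] using norm_integral_le_of_norm_le_const (μ := ν)
      (.of_forall (norm_integral_comp_const_sub_sub_le hD hf hfc))
  calc
    _ ≤ _ := norm_sub_le_norm_sub_add_norm_sub _ _ _
    _ ≤ (D * ∫ t, ‖deriv f t‖) + D * ∫ t, ‖deriv f t‖ := add_le_add h_inner h_outer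
    _ = 2 * D * ∫ t, ‖deriv f t‖ := by ring

end DistributionFunctions

section Exponential

variable {F : Type*} [NormedAddCommGroup F] [NormedSpace ℝ F] {r : ℝ}

lemma exponentialPDFReal_eq_indicator (r : ℝ) :
    exponentialPDFReal r = (Ici 0).indicator fun x ↦ r * exp (-r * x) := by
  ext x
  simp [exponentialPDFReal, gammaPDFReal, indicator]

lemma integrable_exponentialPDFReal (hr : 0 < r) : Integrable (exponentialPDFReal r) := by
  rw [exponentialPDFReal_eq_indicator, integrable_indicator_iff measurableSet_Ici,
    integrableOn_Ici_iff_integrableOn_Ioi]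
  exact (exp_neg_integrableOn_Ioi 0 hr).const_mul r

lemma exponentialPDFReal_le (hr : 0 < r) (x : ℝ) : exponentialPDFReal r x ≤ r := by
  rw [exponentialPDFReal_eq_indicator]
  refine indicator_le' (fun x (hx : 0 ≤ x) ↦ ?_) (fun _ _ ↦ hr.le) x
  exact mul_le_of_le_one_right hr.le (exp_le_one_iff.2 (by nlinarith))

lemma integral_expMeasure (hr : 0 < r) (f : ℝ → F) :
    ∫ x, f x ∂(expMeasure r) = ∫ x, exponentialPDFReal r x • f x := by
  have h := integral_withDensity_eq_integral_toReal_smul (μ := volume) (f := exponentialPDF r)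
    (by unfold exponentialPDF; fun_prop) (.of_forall fun _ ↦ ENNReal.ofReal_lt_top) f
  refine h.trans (integral_congr_ae (.of_forall fun x ↦ ?_))
  simp only [exponentialPDF, ENNReal.toReal_ofReal (exponentialPDFReal_nonneg hr x)]

lemma measureReal_expMeasure_Ici (hr : 0 < r) (a : ℝ) :
    (expMeasure r).real (Ici a) = exp (-r * max 0 a) := by
  have h_ind : (fun x ↦ exponentialPDFReal r x • (Ici a).indicator (1 : ℝ → ℝ) x) =
      (Ici (max 0 a)).indicator fun x ↦ r * exp (-r * x) := by
    rw [exponentialPDFReal_eq_indicator, ← Ici_inter_Ici]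
    ext x
    simp only [smul_eq_mul, ← inter_indicator_mul, Pi.one_apply, mul_one]
  rw [← integral_indicator_one measurableSet_Ici, integral_expMeasure hr, h_ind,
    integral_indicator measurableSet_Ici, integral_Ici_eq_integral_Ioi, integral_const_mul,
    integral_exp_mul_Ioi (neg_lt_zero.2 hr)]
  field_simp

lemma integral_exponentialPDFReal_mul_sub (hr : 0 < r) (u : ℝ) :
    ∫ x, exponentialPDFReal r x * exponentialPDFReal r (x - u) = r / 2 * exp (-r * |u|) := by
  have h_ind : (fun x ↦ exponentialPDFReal r x * exponentialPDFReal r (x - u)) =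
      (Ici (max 0 u)).indicator fun x ↦ r ^ 2 * exp (r * u) * exp (-(2 * r) * x) := by
    rw [exponentialPDFReal_eq_indicator, ← Ici_inter_Ici]
    ext x
    have h_shift : (Ici 0).indicator (fun x ↦ r * exp (-r * x)) (x - u) =
        (Ici u).indicator (fun x ↦ r * exp (-r * (x - u))) x := by
      simp only [indicator, mem_Ici, sub_nonneg]
    rw [h_shift, ← inter_indicator_mul]
    congr 1
    ext y
    rw [mul_mul_mul_comm, mul_assoc (r ^ 2), ← exp_add, ← exp_add]
    ring_nf
  have h_abs : r * u + -(2 * r) * max 0 u = -r * |u| := by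
    rcases le_total 0 u with hu | hu
    · rw [max_eq_right hu, abs_of_nonneg hu]; ring
    · rw [max_eq_left hu, abs_of_nonpos hu]; ring
  rw [h_ind, integral_indicator measurableSet_Ici, integral_Ici_eq_integral_Ioi,
    integral_const_mul, integral_exp_mul_Ioi (by linarith), ← h_abs, exp_add]
  field_simp

lemma integral_integral_sub_expMeasure [CompleteSpace F] (hr : 0 < r) {f : ℝ → F}
    (hf : Integrable f) :
    ∫ x, ∫ y, f (x - y) ∂(expMeasure r) ∂(expMeasure r) =
      ∫ u, (r / 2 * exp (-r * |u|)) • f u := by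
  have h_int : Integrable (fun p : ℝ × ℝ ↦
      (exponentialPDFReal r p.1 * exponentialPDFReal r (p.1 - p.2)) • f p.2)
      (volume.prod volume) := by
    refine (((integrable_exponentialPDFReal hr).smul_prod hf).bdd_smul r
      (φ := fun p : ℝ × ℝ ↦ exponentialPDFReal r (p.1 - p.2))
      (Measurable.aestronglyMeasurable (by fun_prop)) (.of_forall fun p ↦ ?_)).congr
      (.of_forall fun p ↦ ?_)
    · rw [norm_of_nonneg (exponentialPDFReal_nonneg hr _)]
      exact exponentialPDFReal_le hr _
    · simp only [Pi.smul_apply', smul_smul, mul_comm]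
  have h_subst (x : ℝ) : ∫ y, exponentialPDFReal r y • f (x - y) =
      ∫ u, exponentialPDFReal r (x - u) • f u := by
    rw [← integral_sub_left_eq_self _ volume x]
    simp only [sub_sub_cancel]
  simp_rw [integral_expMeasure hr, h_subst, ← integral_smul, smul_smul]
  rw [integral_integral_swap h_int]
  simp_rw [integral_smul_const, integral_exponentialPDFReal_mul_sub hr]

/-- The law of `b - X` for `X` exponential of rate `r`, that is, the probability measure on
`(-∞, b]` with density `r * exp (r * (t - b))`. -/
noncomputable def reflectedExpMeasure (r b : ℝ) : Measure ℝ :=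
  (expMeasure r).map (b - ·)

lemma isProbabilityMeasure_reflectedExpMeasure (hr : 0 < r) (b : ℝ) :
    IsProbabilityMeasure (reflectedExpMeasure r b) :=
  have := isProbabilityMeasure_expMeasure hr
  Measure.isProbabilityMeasure_map (by fun_prop)

lemma measureReal_reflectedExpMeasure_Iic (hr : 0 < r) (b t : ℝ) :
    (reflectedExpMeasure r b).real (Iic t) = exp (r * (min t b - b)) := by
  have h_max : max 0 (b - t) = b - min t b := by
    rw [max_comm, ← sub_self b, max_sub_sub_left]
  rw [reflectedExpMeasure, map_measureReal_apply (by fun_prop) measurableSet_Iic,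
    preimage_const_sub_Iic, measureReal_expMeasure_Ici hr, h_max]
  ring_nf

lemma integral_integral_sub_reflectedExpMeasure [CompleteSpace F] (hr : 0 < r) (b : ℝ) {f : ℝ → F}
    (hf : Integrable f) :
    ∫ x, ∫ y, f (y - x) ∂(reflectedExpMeasure r b) ∂(reflectedExpMeasure r b) =
      ∫ u, (r / 2 * exp (-r * |u|)) • f u := by
  have h_emb : MeasurableEmbedding fun x : ℝ ↦ b - x := (Homeomorph.subLeft b).measurableEmbedding
  simp_rw [reflectedExpMeasure, h_emb.integral_map, sub_sub_sub_cancel_left]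
  exact integral_integral_sub_expMeasure hr hf

end Exponential

section NormalizedWeights

variable {α : Type*} [MeasurableSpace α] {s : Finset α} {w : α → ℝ}

/-- The probability measure carried by `s` in which each point has mass proportional to its weight
`w`. Meant for nonnegative weights that do not all vanish on `s`. -/
noncomputable def normalizedWeights (s : Finset α) (w : α → ℝ) : Measure α :=
  ∑ x ∈ s, ENNReal.ofReal (w x / ∑ z ∈ s, w z) • Measure.dirac x

lemma isProbabilityMeasure_normalizedWeights (hw : ∀ x ∈ s, 0 ≤ w x) (hpos : 0 < ∑ x ∈ s, w x) :
    IsProbabilityMeasure (normalizedWeights s w) where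
  measure_univ := by
    simp only [normalizedWeights, Measure.finsetSum_apply, Measure.smul_apply, measure_univ,
      smul_eq_mul, mul_one]
    rw [← ENNReal.ofReal_sum_of_nonneg fun x hx ↦ div_nonneg (hw x hx) hpos.le,
      ← Finset.sum_div, div_self hpos.ne', ENNReal.ofReal_one]

variable [MeasurableSingletonClass α]

lemma integral_normalizedWeights {F : Type*} [NormedAddCommGroup F] [NormedSpace ℝ F]
    [CompleteSpace F] (hw : ∀ x ∈ s, 0 ≤ w x) (g : α → F) :
    ∫ x, g x ∂(normalizedWeights s w) = ∑ x ∈ s, (w x / ∑ z ∈ s, w z) • g x := by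
  have h_int (x : α) : Integrable g (ENNReal.ofReal (w x / ∑ z ∈ s, w z) • Measure.dirac x) :=
    (integrable_dirac (by finiteness)).smul_measure ENNReal.ofReal_ne_top
  rw [normalizedWeights, integral_finsetSum_measure fun x _ ↦ h_int x]
  refine Finset.sum_congr rfl fun x hx ↦ ?_
  rw [integral_smul_measure, integral_dirac,
    ENNReal.toReal_ofReal (div_nonneg (hw x hx) (Finset.sum_nonneg hw))]

lemma measureReal_normalizedWeights (hw : ∀ x ∈ s, 0 ≤ w x) {A : Set α} (hA : MeasurableSet A) :
    (normalizedWeights s w).real A = (∑ x ∈ s, A.indicator w x) / ∑ x ∈ s, w x := by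
  rw [← integral_indicator_one hA, integral_normalizedWeights hw, Finset.sum_div]
  refine Finset.sum_congr rfl fun x _ ↦ ?_
  by_cases hx : x ∈ A <;> simp [hx]

lemma integral_integral_normalizedWeights (hw : ∀ x ∈ s, 0 ≤ w x) (g : α → α → ℝ) :
    ∫ x, ∫ y, g x y ∂(normalizedWeights s w) ∂(normalizedWeights s w) =
      (∑ x ∈ s, ∑ y ∈ s, w x * w y * g x y) / (∑ x ∈ s, w x) ^ 2 := by
  simp_rw [integral_normalizedWeights hw, smul_eq_mul, Finset.mul_sum, Finset.sum_div]
  refine Finset.sum_congr rfl fun x _ ↦ Finset.sum_congr rfl fun y _ ↦ ?_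
  ring

end NormalizedWeights

lemma abs_pair_average_sub_integral_le {s : Finset ℝ} {w : ℝ → ℝ} (hw : ∀ x ∈ s, 0 ≤ w x)
    (hpos : 0 < ∑ x ∈ s, w x) {r : ℝ} (hr : 0 < r) {b D : ℝ}
    (hD : ∀ t, |(∑ x ∈ s, (Iic t).indicator w x) / ∑ x ∈ s, w x - exp (r * (min t b - b))| ≤ D)
    {f : ℝ → ℝ} (hf : ContDiff ℝ 1 f) (hfc : HasCompactSupport f) :
    |(∑ x ∈ s, ∑ y ∈ s, w x * w y * f (y - x)) / (∑ x ∈ s, w x) ^ 2 -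
        ∫ t, f t * (r / 2 * exp (-r * |t|))| ≤ 2 * D * ∫ t, |deriv f t| := by
  have := isProbabilityMeasure_normalizedWeights hw hpos
  have := isProbabilityMeasure_reflectedExpMeasure hr b
  have h_cdf (t : ℝ) : |(normalizedWeights s w).real (Iic t) -
      (reflectedExpMeasure r b).real (Iic t)| ≤ D := by
    rw [measureReal_normalizedWeights hw measurableSet_Iic,
      measureReal_reflectedExpMeasure_Iic hr]
    exact hD t
  have h := norm_integral_integral_sub_le h_cdf hf hfc
  rw [integral_integral_normalizedWeights hw fun x y ↦ f (y - x),
    integral_integral_sub_reflectedExpMeasure hr b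
      (hf.continuous.integrable_of_hasCompactSupport hfc)] at h
  simpa only [smul_eq_mul, mul_comm (f _), norm_eq_abs] using h

lemma exists_eventually_forall_le_norm_le_of_isBigO {α F : Type*} [LinearOrder α] [Nonempty α]
    [SeminormedAddCommGroup F] {R : α → F} {h : α → ℝ} (hR : ∀ s, ∃ B, ∀ t ≤ s, ‖R t‖ ≤ B)
    (h_mono : Monotone h) (h_pos : ∀ t, 0 < h t) (hRh : R =O[atTop] h) :
    ∃ K, ∀ᶠ b in atTop, ∀ t ≤ b, ‖R t‖ ≤ K * h b := by
  obtain ⟨C, hC, hCR⟩ := hRh.exists_pos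
  obtain ⟨t₀, ht₀⟩ := eventually_atTop.1 hCR.bound
  obtain ⟨B, hB⟩ := hR t₀
  refine ⟨max C (B / h t₀), ?_⟩
  filter_upwards [eventually_ge_atTop t₀] with b hb t htb
  rcases le_total t t₀ with ht | ht
  · calc ‖R t‖ ≤ B := hB t ht
      _ = B / h t₀ * h t₀ := (div_mul_cancel₀ B (h_pos t₀).ne').symm
      _ ≤ max C (B / h t₀) * h b := mul_le_mul (le_max_right _ _) (h_mono hb) (h_pos t₀).le
          (hC.le.trans (le_max_left _ _))
  · calc ‖R t‖ ≤ C * ‖h t‖ := ht₀ t ht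
      _ = C * h t := by rw [norm_of_nonneg (h_pos t).le]
      _ ≤ max C (B / h t₀) * h b := mul_le_mul (le_max_left _ _) (h_mono htb) (h_pos t).le
          (hC.le.trans (le_max_left _ _))

lemma abs_div_sub_div_le {a b A B D : ℝ} (hb : 0 ≤ b) (hbB : b ≤ B) (hB : 0 < B) (hBA : B ≤ 2 * A)
    (hab : |a - b| ≤ D) (hAB : |A - B| ≤ D) : |a / A - b / B| ≤ 4 * D / B := by
  have hA : 0 < A := by linarith
  have hD : 0 ≤ D := (abs_nonneg _).trans hab
  have h_split : a / A - b / B = ((a - b) - b / B * (A - B)) / A := by field_simp; ring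
  have h_num : |(a - b) - b / B * (A - B)| ≤ 2 * D := calc
    _ ≤ |a - b| + |b / B * (A - B)| := abs_sub _ _
    _ = |a - b| + b / B * |A - B| := by rw [abs_mul, abs_of_nonneg (div_nonneg hb hB.le)]
    _ ≤ D + 1 * D := by gcongr; exact div_le_one_of_le₀ hbB hB.le
    _ = 2 * D := by ring
  rw [h_split, abs_div, abs_of_pos hA, div_le_div_iff₀ hA hB]
  calc |(a - b) - b / B * (A - B)| * B ≤ 2 * D * (2 * A) := by gcongr
    _ = 4 * D * A := by ring

section GrowthFunction

variable {E : Set ℝ} {ω : ℝ → ℝ} {c δ κ : ℝ}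

/-- The growth function `ω̃ t`, the total weight of the points of `E` in `(-∞, t]`. -/
noncomputable def growthFunction (hfin : ∀ t, (E ∩ Iic t).Finite) (ω : ℝ → ℝ) (t : ℝ) : ℝ :=
  ∑ x ∈ (hfin t).toFinset, ω x

lemma growthFunction_nonneg (hfin : ∀ t, (E ∩ Iic t).Finite) (hω : ∀ x ∈ E, 0 ≤ ω x) (t : ℝ) :
    0 ≤ growthFunction hfin ω t :=
  Finset.sum_nonneg fun x hx ↦ hω x ((hfin t).mem_toFinset.1 hx).1

lemma monotone_growthFunction (hfin : ∀ t, (E ∩ Iic t).Finite) (hω : ∀ x ∈ E, 0 ≤ ω x) :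
    Monotone (growthFunction hfin ω) := fun _ t hst ↦
  Finset.sum_le_sum_of_subset_of_nonneg
    (Finite.toFinset_mono (inter_subset_inter_right E (Iic_subset_Iic.2 hst)))
    fun x hx _ ↦ hω x ((hfin t).mem_toFinset.1 hx).1

lemma sum_indicator_Iic_eq_growthFunction (hfin : ∀ t, (E ∩ Iic t).Finite) (b t : ℝ) :
    ∑ x ∈ (hfin b).toFinset, (Iic t).indicator ω x = growthFunction hfin ω (min t b) := by
  simp only [growthFunction, indicator, mem_Iic, ← Finset.sum_filter]
  congr 1
  ext x
  simp only [Finset.mem_filter, Finite.mem_toFinset, mem_inter_iff, mem_Iic, le_inf_iff]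
  tauto

lemma exists_eventually_forall_le_abs_growthFunction_sub_le (hfin : ∀ t, (E ∩ Iic t).Finite)
    (hω : ∀ x ∈ E, 0 ≤ ω x) (hc : 0 ≤ c) (hδ : 0 ≤ δ) (hκδ : κ ≤ δ)
    (hgrowth : (fun t ↦ growthFunction hfin ω t - c * exp (δ * t))
      =O[atTop] fun t ↦ exp ((δ - κ) * t)) :
    ∃ K, ∀ᶠ b in atTop, ∀ t ≤ b,
      |growthFunction hfin ω t - c * exp (δ * t)| ≤ K * exp ((δ - κ) * b) := by
  refine exists_eventually_forall_le_norm_le_of_isBigO (fun s ↦ ?_) (fun s t hst ↦ ?_)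
    (fun t ↦ exp_pos _) hgrowth
  · refine ⟨growthFunction hfin ω s + c * exp (δ * s), fun t hts ↦ ?_⟩
    calc ‖growthFunction hfin ω t - c * exp (δ * t)‖
        ≤ ‖growthFunction hfin ω t‖ + ‖c * exp (δ * t)‖ := norm_sub_le _ _
      _ = growthFunction hfin ω t + c * exp (δ * t) := by
        rw [norm_of_nonneg (growthFunction_nonneg hfin hω t), norm_of_nonneg (by positivity)]
      _ ≤ growthFunction hfin ω s + c * exp (δ * s) := by
        gcongr
        exact monotone_growthFunction hfin hω hts
  · have : 0 ≤ δ - κ := sub_nonneg.2 hκδ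
    gcongr

lemma eventually_mul_exp_sub_mul_le (K : ℝ) (hc : 0 < c) (hκ : 0 < κ) (δ : ℝ) :
    ∀ᶠ b in atTop, K * exp ((δ - κ) * b) ≤ c * exp (δ * b) / 2 := by
  have h_lim : Tendsto (fun b ↦ K * exp (-κ * b)) atTop (nhds (K * 0)) :=
    (tendsto_exp_atBot.comp (tendsto_id.const_mul_atTop_of_neg (neg_lt_zero.2 hκ))).const_mul K
  filter_upwards [h_lim.eventually_le_const (by linarith : K * 0 < c / 2)] with b hb
  calc K * exp ((δ - κ) * b) = K * exp (-κ * b) * exp (δ * b) := by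
        rw [mul_assoc, ← exp_add]; ring_nf
    _ ≤ c / 2 * exp (δ * b) := by gcongr
    _ = c * exp (δ * b) / 2 := by ring

lemma abs_sum_indicator_div_growthFunction_sub_exp_le (hfin : ∀ t, (E ∩ Iic t).Finite)
    (hc : 0 < c) (hδ : 0 ≤ δ) {b D : ℝ} (hD : D ≤ c * exp (δ * b) / 2)
    (hgrowth : ∀ t ≤ b, |growthFunction hfin ω t - c * exp (δ * t)| ≤ D) (t : ℝ) :
    |(∑ x ∈ (hfin b).toFinset, (Iic t).indicator ω x) / growthFunction hfin ω b -
        exp (δ * (min t b - b))| ≤ 4 * D / (c * exp (δ * b)) := by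
  have h_double : c * exp (δ * b) ≤ 2 * growthFunction hfin ω b := by
    linarith [(abs_le.1 (hgrowth b le_rfl)).1]
  have h_exp : exp (δ * (min t b - b)) = c * exp (δ * min t b) / (c * exp (δ * b)) := by
    rw [mul_div_mul_left _ _ hc.ne', ← exp_sub, mul_sub]
  rw [sum_indicator_Iic_eq_growthFunction, h_exp]
  exact abs_div_sub_div_le (by positivity) (by gcongr; exact min_le_right t b) (by positivity)
    h_double (hgrowth _ (min_le_right t b)) (hgrowth b le_rfl)

theorem pair_correlation_error_term_general (hfin : ∀ t, (E ∩ Iic t).Finite)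
    (hω : ∀ x ∈ E, 0 ≤ ω x) (hc : 0 < c) (hδ : 0 < δ) (hκ : 0 < κ) (hκδ : κ ≤ δ)
    (hgrowth : (fun t ↦ growthFunction hfin ω t - c * exp (δ * t))
      =O[atTop] fun t ↦ exp ((δ - κ) * t)) :
    ∃ C, ∀ᶠ b in atTop, ∀ f : ℝ → ℝ, ContDiff ℝ 1 f → HasCompactSupport f →
      |(∑ x ∈ (hfin b).toFinset, ∑ y ∈ (hfin b).toFinset, ω x * ω y * f (y - x)) /
          growthFunction hfin ω b ^ 2 - ∫ t, f t * (δ / 2 * exp (-δ * |t|))| ≤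
        C * exp (-κ * b) * ∫ t, |deriv f t| := by
  obtain ⟨K, hK⟩ :=
    exists_eventually_forall_le_abs_growthFunction_sub_le hfin hω hc.le hδ.le hκδ hgrowth
  refine ⟨8 * K / c, ?_⟩
  filter_upwards [hK, eventually_mul_exp_sub_mul_le K hc hκ δ] with b hKb h_half f hf hfc
  have h_pos : 0 < growthFunction hfin ω b := by
    linarith [(abs_le.1 (hKb b le_rfl)).1, mul_pos hc (exp_pos (δ * b))]
  have h_rate : K * exp ((δ - κ) * b) / (c * exp (δ * b)) = K / c * exp (-κ * b) := by
    rw [mul_div_mul_comm, ← exp_sub]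
    ring_nf
  calc _ ≤ 2 * (4 * (K * exp ((δ - κ) * b)) / (c * exp (δ * b))) * ∫ t, |deriv f t| :=
        abs_pair_average_sub_integral_le (fun x hx ↦ hω x ((hfin b).mem_toFinset.1 hx).1) h_pos hδ
          (abs_sum_indicator_div_growthFunction_sub_exp_le hfin hc hδ.le h_half hKb) hf hfc
    _ = 8 * K / c * exp (-κ * b) * ∫ t, |deriv f t| := by
        rw [mul_div_assoc 4, h_rate]
        ring

end GrowthFunction

lemma integral_norm_deriv_le {F : Type*} [NormedAddCommGroup F] [NormedSpace ℝ F] {f : ℝ → F}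
    {A M : ℝ} (hA : 0 ≤ A) (hf : Function.support f ⊆ Icc (-A) A) (hM : ∀ x, ‖deriv f x‖ ≤ M) :
    ∫ t, ‖deriv f t‖ ≤ 2 * A * M := by
  have h_zero (t : ℝ) (ht : t ∉ Icc (-A) A) : ‖deriv f t‖ = 0 := by
    rw [norm_eq_zero]
    by_contra h
    exact ht (closure_minimal hf isClosed_Icc (support_deriv_subset h))
  have h_le := norm_setIntegral_le_of_norm_le_const (μ := volume) measure_Icc_lt_top
    fun t (_ : t ∈ Icc (-A) A) ↦ (norm_norm (deriv f t)).trans_le (hM t)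
  rw [setIntegral_eq_integral_of_forall_compl_eq_zero h_zero,
    volume_real_Icc_of_le (by linarith)] at h_le
  calc ∫ t, ‖deriv f t‖ ≤ M * (A - -A) := (le_norm_self _).trans h_le
    _ = 2 * A * M := by ring

lemma mul_integral_abs_deriv_le_error_terms {f : ℝ → ℝ} {A M M' δ κ b : ℝ} (C : ℝ) (hA : 0 ≤ A)
    (hf : Function.support f ⊆ Icc (-A) A) (hM : 0 ≤ M) (hM' : ∀ x, |deriv f x| ≤ M')
    (hκ : 0 ≤ κ) (hb : 0 ≤ b) :
    C * exp (-κ * b) * ∫ t, |deriv f t| ≤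
      2 * |C| * A * exp (δ * A) * exp (-κ * b / 12) * M + 2 * |C| * A * exp (-κ * b / 4) * M' := by
  have h_exp : exp (-κ * b) ≤ exp (-κ * b / 4) := exp_le_exp.2 (by nlinarith [mul_nonneg hκ hb])
  calc C * exp (-κ * b) * ∫ t, |deriv f t|
      ≤ |C| * exp (-κ * b / 4) * (2 * A * M') := by
        gcongr
        · exact le_abs_self C
        · exact integral_norm_deriv_le hA hf hM'
    _ = 2 * |C| * A * exp (-κ * b / 4) * M' := by ring
    _ ≤ _ := le_add_of_nonneg_left (by positivity)

/-- Theorem 3.1 in the case `α = 0` and `ψ = 1`, with explicit error terms. -/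
theorem pair_correlation_error_term
    (E : Set ℝ) (hE : E ⊆ Set.Ici 0) (hfin : ∀ t : ℝ, (E ∩ Set.Iic t).Finite)
    (ω : ℝ → ℝ) (hω : ∀ x ∈ E, 0 < ω x)
    (c δ κ : ℝ) (hc : 0 < c) (hδ : 0 < δ) (hκ : 0 < κ) (hκδ : κ ≤ δ)
    (hET : ∃ C : ℝ, ∃ t0 : ℝ, ∀ t ≥ t0,
      abs ((∑ x ∈ (hfin t).toFinset, ω x) - c * Real.exp (δ * t))
        ≤ C * Real.exp ((δ - κ) * t)) :
    ∃ C' : ℝ, ∃ N0 : ℕ, ∀ A ≥ (1:ℝ), ∀ f : ℝ → ℝ, ContDiff ℝ 1 f →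
      Function.support f ⊆ Set.Icc (-A) A →
      ∀ Mf Mf' : ℝ, (∀ x, |f x| ≤ Mf) → (∀ x, |deriv f x| ≤ Mf') →
      ∀ N ≥ N0,
        abs ((∑ x ∈ (hfin N).toFinset, ∑ y ∈ (hfin N).toFinset, ω x * ω y * f (y - x)) /
              (∑ x ∈ (hfin N).toFinset, ω x) ^ 2 -
            ∫ t : ℝ, f t * (δ / 2 * Real.exp (-δ * |t|)))
          ≤ C' * A * Real.exp (δ * A) * Real.exp (-κ * N / 12) * Mf +
            C' * A * Real.exp (-κ * N / 4) * Mf' := by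
  obtain ⟨C₀, t₀, hC₀⟩ := hET
  have hgrowth : (fun t ↦ growthFunction hfin ω t - c * exp (δ * t))
      =O[atTop] fun t ↦ exp ((δ - κ) * t) :=
    .of_bound C₀ <| (eventually_ge_atTop t₀).mono fun t ht ↦ by
      simpa only [growthFunction, norm_eq_abs, abs_exp] using hC₀ t ht
  obtain ⟨C, hC⟩ :=
    pair_correlation_error_term_general hfin (fun x hx ↦ (hω x hx).le) hc hδ hκ hκδ hgrowth
  obtain ⟨N₀, hN₀⟩ := eventually_atTop.1 (tendsto_natCast_atTop_atTop.eventually hC)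
  exact ⟨2 * |C|, N₀, fun A hA f hf hs Mf Mf' hM hM' N hN ↦
    (hN₀ N hN f hf (.of_support_subset_isCompact isCompact_Icc hs)).trans
      (mul_integral_abs_deriv_le_error_terms C (by linarith) hs ((abs_nonneg _).trans (hM 0)) hM'
        hκ.le N.cast_nonneg)⟩
end
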